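/- arXiv:2505.19664 — 3 statements merged into one kernel-verified Lean document; each statement's English description precedes it below -/
import Mathlib

section
/- Let G : [0,1]×[0,1] → [0,∞) be a graphon (measurable, symmetric, bounded) with ‖G‖_∞ ≤ M and degrees bounded below by some c > 0. Then there exists a constant C, depending only on M and c, such that for all setwise measurable families (μ^u)_{u∈[0,1]} and (ν^u)_{u∈[0,1]} of Borel probability measures on ℝ^d with sup_{u∈[0,1]} ∫ |x|² dμ^u(x) < ∞ and sup_{u∈[0,1]} ∫ |x|² dν^u(x) < ∞, one has ∫₀¹ W₂²([Gμ]^u, [Gν]^u) du ≤ C ∫₀¹ W₂²(μ^u, ν^u) du, where the integrals over [0,1] are upper Lebesgue integrals. -/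
open MeasureTheory ENNReal

noncomputable section

/-- The normalized graphon `G̃(u,v) = G(u,v) / ∫₀¹ G(u,w) dw`. -/
def gnorm (G : ℝ → ℝ → ℝ) (u v : ℝ) : ℝ :=
  G u v / ∫ w in Set.Icc (0:ℝ) 1, G u w

/-- The squared 2-Wasserstein distance, as the infimum over couplings of the integral of the
squared distance (valued in `ℝ≥0∞`). -/
def W2sq {E : Type*} [NormedAddCommGroup E] [MeasurableSpace E]
    (μ ν : Measure E) : ℝ≥0∞ :=
  ⨅ (π : Measure (E × E)) (_ : IsProbabilityMeasure π)
    (_ : π.map Prod.fst = μ) (_ : π.map Prod.snd = ν),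
    ∫⁻ p, (‖p.1 - p.2‖₊ : ℝ≥0∞) ^ 2 ∂π

/-- The upper Lebesgue integral of an `ℝ≥0∞`-valued function. -/
def upperLintegral {α : Type*} [MeasurableSpace α] (m : Measure α) (f : α → ℝ≥0∞) : ℝ≥0∞ :=
  ⨅ (g : α → ℝ≥0∞) (_ : Measurable g) (_ : ∀ x, f x ≤ g x), ∫⁻ x, g x ∂m

/-- `ν` is the graphon aggregate family `[Gμ]` of the family `μ`. -/
def IsGraphonAggregate {E : Type*} [MeasurableSpace E] (G : ℝ → ℝ → ℝ)
    (μ ν : ℝ → Measure E) : Prop :=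
  ∀ u ∈ Set.Icc (0:ℝ) 1, IsProbabilityMeasure (ν u) ∧
    ∀ B : Set E, MeasurableSet B →
      ν u B = ∫⁻ v in Set.Icc (0:ℝ) 1, ENNReal.ofReal (gnorm G u v) * μ v B

/-!
`[Gμ]^u` is the mixture of the family `μ` under the law with density `G̃(u, ·)`, which is at most
`M / c` times Lebesgue measure on `[0,1]`. The theorem therefore reduces to the convexity of `W_p`
under mixtures, in the form `W_p(∫ μ^v dκ, ∫ ν^v dκ)^p ≤ ∫ g^p dκ` for measurable
`g v ≥ W_p(μ^v, ν^v)`.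

Choosing optimal couplings of the fibres measurably in `v` is avoided as follows. Push all
measures forward by maps with finite range that are `L^p`-close to the identity. On finite sets,
the triples (source law, target law, upper bound for the transport cost) form a closed convex set,
so averaging them over `κ` gives a plan between the averaged laws (Jensen). Conditional laws lift
this plan to a coupling of the original mixtures, and by Minkowski's inequality quantising costs
only twice the total `L^p` distance of the maps to the identity.
-/

open ProbabilityTheory
open scoped NNReal Pointwise

section Mixtures

variable {α E F : Type*} [MeasurableSpace α] [MeasurableSpace E] [MeasurableSpace F]
  {κ : Measure α} {μ : α → Measure E}

lemma aemeasurable_of_forall_aemeasurable_apply [MeasurableSpace.CountablyGenerated E]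
    (hfin : ∀ᵐ v ∂κ, IsFiniteMeasure (μ v))
    (hμ : ∀ B, MeasurableSet B → AEMeasurable (fun v ↦ μ v B) κ) : AEMeasurable μ κ := by
  set 𝒜 := generateSetAlgebra (MeasurableSpace.countableGeneratingSet E) with h𝒜
  have hgen : ‹MeasurableSpace E› = MeasurableSpace.generateFrom 𝒜 := by
    rw [h𝒜, generateFrom_generateSetAlgebra_eq,
      MeasurableSpace.generateFrom_countableGeneratingSet]
  have hmeas : ∀ B ∈ 𝒜, MeasurableSet B := fun B hB ↦
    hgen ▸ MeasurableSpace.measurableSet_generateFrom hB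
  have h𝒜c : 𝒜.Countable :=
    countable_generateSetAlgebra MeasurableSpace.countable_countableGeneratingSet
  have hae : ∀ᵐ v ∂κ, IsFiniteMeasure (μ v) ∧
      ∀ B, ∀ hB : B ∈ 𝒜, μ v B = (hμ B (hmeas B hB)).mk _ v :=
    hfin.and ((ae_ball_iff h𝒜c).2 fun B hB ↦ (hμ B (hmeas B hB)).ae_eq_mk)
  obtain ⟨s, hsκ, hs, hsμ⟩ := hae.exists_measurable_mem
  have hfin' : ∀ v, IsFiniteMeasure (s.indicator μ v) := fun v ↦ by
    by_cases hv : v ∈ s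
    · simpa [hv] using (hsμ v hv).1
    · simp only [hv, not_false_eq_true, Set.indicator_of_notMem]; infer_instance
  have happly : ∀ B ∈ 𝒜, Measurable fun v ↦ s.indicator μ v B := fun B hB ↦ by
    have heq : (fun v ↦ s.indicator μ v B) = s.indicator ((hμ B (hmeas B hB)).mk _) := by
      ext v
      by_cases hv : v ∈ s
      · simp [hv, (hsμ v hv).2 B hB]
      · simp [hv]
    exact heq ▸ (hμ B (hmeas B hB)).measurable_mk.indicator hs
  have hpi : IsPiSystem 𝒜 := fun A hA B hB _ ↦
    isSetAlgebra_generateSetAlgebra.inter_mem hA hB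
  refine ⟨s.indicator μ, .measure_of_isPiSystem hgen hpi happly
    (happly _ isSetAlgebra_generateSetAlgebra.univ_mem), ?_⟩
  filter_upwards [hsκ] with v hv
  rw [Set.indicator_of_mem hv]

lemma map_measure_bind (hμ : AEMeasurable μ κ) {k : E → F} (hk : Measurable k) :
    (κ.bind μ).map k = κ.bind fun v ↦ (μ v).map k := by
  have hμk : AEMeasurable (fun v ↦ (μ v).map k) κ :=
    (Measure.measurable_map k hk).comp_aemeasurable hμ
  ext B hB
  rw [Measure.map_apply hk hB, Measure.bind_apply (hk hB) hμ, Measure.bind_apply hB hμk]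
  simp_rw [Measure.map_apply hk hB]

lemma bind_measure_map {m : F → Measure E} (hm : Measurable m) {k : α → F}
    (hk : Measurable k) : (κ.map k).bind m = κ.bind (m ∘ k) := by
  rw [Measure.bind, Measure.map_map hm hk, ← Measure.bind]

lemma aemeasurable_eLpNorm {V : Type*} [NormedAddCommGroup V] [MeasurableSpace V]
    [OpensMeasurableSpace V] {p : ℝ≥0} (hp : p ≠ 0) (hμ : AEMeasurable μ κ) {f : E → V}
    (hf : Measurable f) : AEMeasurable (fun v ↦ eLpNorm f p (μ v)) κ := by
  simp_rw [eLpNorm_nnreal_eq_lintegral hp]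
  exact ((Measure.measurable_lintegral (hf.enorm.pow_const _)).comp_aemeasurable hμ).pow_const _

lemma eLpNorm_eLpNorm_eq_eLpNorm_bind {V : Type*} [NormedAddCommGroup V] [MeasurableSpace V]
    [OpensMeasurableSpace V] {p : ℝ≥0} (hp : p ≠ 0) (hμ : AEMeasurable μ κ) {f : E → V}
    (hf : Measurable f) :
    eLpNorm (fun v ↦ eLpNorm f p (μ v)) p κ = eLpNorm f p (κ.bind μ) := by
  rw [eLpNorm_nnreal_eq_lintegral hp, eLpNorm_nnreal_eq_lintegral hp,
    Measure.lintegral_bind hμ (hf.enorm.pow_const _).aemeasurable]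
  simp_rw [enorm_eq_self, eLpNorm_nnreal_pow_eq_lintegral hp]

lemma integrable_measureReal_apply [IsFiniteMeasure κ] (hμ : AEMeasurable μ κ)
    (hprob : ∀ᵐ v ∂κ, IsProbabilityMeasure (μ v)) {B : Set E} (hB : MeasurableSet B) :
    Integrable (fun v ↦ (μ v).real B) κ := by
  refine .of_bound (((Measure.measurable_coe hB).comp_aemeasurable hμ).ennreal_toReal
    |>.aestronglyMeasurable) 1 ?_
  filter_upwards [hprob] with v hv
  simp [abs_of_nonneg, measureReal_le_one]

lemma integral_measureReal_apply (hμ : AEMeasurable μ κ)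
    (hfin : ∀ᵐ v ∂κ, IsFiniteMeasure (μ v)) {B : Set E} (hB : MeasurableSet B) :
    ∫ v, (μ v).real B ∂κ = (κ.bind μ).real B := by
  simp_rw [measureReal_def, Measure.bind_apply hB hμ]
  refine integral_toReal ((Measure.measurable_coe hB).comp_aemeasurable hμ) ?_
  filter_upwards [hfin] with v hv using measure_lt_top _ _

end Mixtures

lemma map_condDistrib_id_ae_eq_dirac {X S : Type*} [MeasurableSpace X] [MeasurableSpace S]
    [StandardBorelSpace X] [StandardBorelSpace S] [Nonempty X] {μ : Measure X}
    [IsFiniteMeasure μ] {k : X → S} (hk : Measurable k) :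
    ∀ᵐ s ∂μ.map k, (condDistrib id k μ s).map k = Measure.dirac s := by
  have : Nonempty S := ‹Nonempty X›.map k
  filter_upwards [condDistrib_comp k (Y := id) aemeasurable_id hk, condDistrib_self k]
    with s hcomp hself
  rw [← Kernel.map_apply _ hk, ← hcomp, Function.comp_id, hself, Kernel.id_apply]

/-- `π` is a coupling of `μ` and `ν`: a measure on the product with marginals `μ` and `ν`. -/
structure IsCoupling {X Y : Type*} [MeasurableSpace X] [MeasurableSpace Y]
    (π : Measure (X × Y)) (μ : Measure X) (ν : Measure Y) : Prop where
  fst : MeasurePreserving Prod.fst π μ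
  snd : MeasurePreserving Prod.snd π ν

namespace IsCoupling

variable {X Y S T : Type*} [MeasurableSpace X] [MeasurableSpace Y] [MeasurableSpace S]
  [MeasurableSpace T] {π : Measure (X × Y)} {μ : Measure X} {ν : Measure Y}

lemma isProbabilityMeasure [IsProbabilityMeasure μ] (hπ : IsCoupling π μ ν) :
    IsProbabilityMeasure π :=
  have : IsProbabilityMeasure (π.map Prod.fst) := by rwa [hπ.fst.map_eq]
  Measure.isProbabilityMeasure_of_map Prod.fst

lemma map {k : X → S} {l : Y → T} (hk : Measurable k) (hl : Measurable l)
    (hπ : IsCoupling π μ ν) : IsCoupling (π.map (Prod.map k l)) (μ.map k) (ν.map l) where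
  fst := ⟨measurable_fst, by
    rw [Measure.map_map measurable_fst (hk.prodMap hl)]
    exact ((hk.measurePreserving μ).comp hπ.fst).map_eq⟩
  snd := ⟨measurable_snd, by
    rw [Measure.map_map measurable_snd (hk.prodMap hl)]
    exact ((hl.measurePreserving ν).comp hπ.snd).map_eq⟩

lemma parallelComp (hπ : IsCoupling π μ ν) (κ : Kernel X S) (η : Kernel Y T) [IsMarkovKernel κ]
    [IsMarkovKernel η] : IsCoupling ((κ ∥ₖ η) ∘ₘ π) (κ ∘ₘ μ) (η ∘ₘ ν) where
  fst := by
    refine ⟨measurable_fst, ?_⟩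
    rw [map_measure_bind (Kernel.aemeasurable _) measurable_fst, ← hπ.fst.map_eq,
      bind_measure_map κ.measurable measurable_fst]
    simp [Kernel.parallelComp_apply, Function.comp_def]
  snd := by
    refine ⟨measurable_snd, ?_⟩
    rw [map_measure_bind (Kernel.aemeasurable _) measurable_snd, ← hπ.snd.map_eq,
      bind_measure_map η.measurable measurable_snd]
    simp [Kernel.parallelComp_apply, Function.comp_def]

lemma exists_map_eq [StandardBorelSpace X] [StandardBorelSpace Y] [StandardBorelSpace S]
    [StandardBorelSpace T] [IsProbabilityMeasure μ] [IsProbabilityMeasure ν]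
    {k : X → S} {l : Y → T} (hk : Measurable k) (hl : Measurable l) {ρ : Measure (S × T)}
    (hρ : IsCoupling ρ (μ.map k) (ν.map l)) :
    ∃ π, IsCoupling π μ ν ∧ π.map (Prod.map k l) = ρ := by
  have : Nonempty X := nonempty_of_isProbabilityMeasure μ
  have : Nonempty Y := nonempty_of_isProbabilityMeasure ν
  set κ := condDistrib id k μ
  set η := condDistrib id l ν
  have hκ : κ ∘ₘ μ.map k = μ := by
    simpa using condDistrib_comp_map hk.aemeasurable aemeasurable_id
  have hη : η ∘ₘ ν.map l = ν := by
    simpa using condDistrib_comp_map hl.aemeasurable aemeasurable_id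
  refine ⟨(κ ∥ₖ η) ∘ₘ ρ, by simpa only [hκ, hη] using hρ.parallelComp κ η, ?_⟩
  have hfiber : ∀ᵐ z ∂ρ, ((κ ∥ₖ η) z).map (Prod.map k l) = Measure.dirac z := by
    filter_upwards [hρ.fst.quasiMeasurePreserving.ae (map_condDistrib_id_ae_eq_dirac hk),
      hρ.snd.quasiMeasurePreserving.ae (map_condDistrib_id_ae_eq_dirac hl)] with z hz₁ hz₂
    rw [Kernel.parallelComp_apply, ← Measure.map_prod_map _ _ hk hl, hz₁, hz₂,
      Measure.dirac_prod_dirac]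
  rw [map_measure_bind (Kernel.aemeasurable _) (hk.prodMap hl), Measure.bind_congr_right hfiber,
    Measure.bind_dirac]

variable {V : Type*} [NormedAddCommGroup V] {p : ℝ≥0∞}

lemma eLpNorm_sub_le (hp : 1 ≤ p) {f f' : X → V} {g g' : Y → V}
    (hf : AEStronglyMeasurable f μ) (hf' : AEStronglyMeasurable f' μ)
    (hg : AEStronglyMeasurable g ν) (hg' : AEStronglyMeasurable g' ν) (hπ : IsCoupling π μ ν) :
    eLpNorm (fun z ↦ f z.1 - g z.2) p π ≤ eLpNorm (f - f') p μ +
      eLpNorm (fun z ↦ f' z.1 - g' z.2) p π + eLpNorm (g - g') p ν := by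
  have hff' := hf.sub hf'
  have hgg' := hg.sub hg'
  rw [← eLpNorm_comp_measurePreserving hff' hπ.fst, ← eLpNorm_comp_measurePreserving hgg' hπ.snd]
  have hsplit : (fun z ↦ f z.1 - g z.2) = (f - f') ∘ Prod.fst + (fun z ↦ f' z.1 - g' z.2) -
    (g - g') ∘ Prod.snd := by ext z; simp
  have hfst := hff'.comp_measurePreserving hπ.fst
  have hmid := (hf'.comp_measurePreserving hπ.fst).sub (hg'.comp_measurePreserving hπ.snd)
  calc _ ≤ _ := (congrArg (eLpNorm · p π) hsplit).le
    _ ≤ _ := MeasureTheory.eLpNorm_sub_le (hfst.add hmid) (hgg'.comp_measurePreserving hπ.snd) hp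
    _ ≤ _ := by gcongr; exact eLpNorm_add_le hfst hmid hp

end IsCoupling

section FiniteTransport

variable {X Y : Type*} [Fintype X] [Fintype Y]

/-- The epigraph of the optimal transport cost between probability vectors on two finite sets,
for the cost function `w`, as a subset of the vector space of triples (source, target, cost). -/
def transportEpigraph (w : X × Y → ℝ) : Set ((X → ℝ) × (Y → ℝ) × ℝ) :=
  {(a, b, t) : (X → ℝ) × (Y → ℝ) × ℝ | ∃ p ∈ stdSimplex ℝ (X × Y), (∀ x, ∑ y, p (x, y) = a x) ∧
    (∀ y, ∑ x, p (x, y) = b y) ∧ ∑ z, p z * w z ≤ t}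

/-- The linear map sending a finite transport plan to its two marginals and its cost. -/
def marginalsAndCost (w : X × Y → ℝ) : (X × Y → ℝ) →ₗ[ℝ] (X → ℝ) × (Y → ℝ) × ℝ where
  toFun p := (fun x ↦ ∑ y, p (x, y), fun y ↦ ∑ x, p (x, y), ∑ z, p z * w z)
  map_add' p q := by simp [Finset.sum_add_distrib, add_mul, funext_iff]
  map_smul' r p := by simp [Finset.mul_sum, mul_assoc, funext_iff]

lemma transportEpigraph_eq_image_add (w : X × Y → ℝ) : transportEpigraph w =
    marginalsAndCost w '' stdSimplex ℝ (X × Y) + {0} ×ˢ {0} ×ˢ Set.Ici 0 := by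
  ext ⟨a, b, t⟩
  constructor
  · rintro ⟨p, hp, ha, hb, ht⟩
    exact ⟨_, ⟨p, hp, rfl⟩, (0, 0, t - ∑ z, p z * w z), ⟨rfl, rfl, sub_nonneg.2 ht⟩,
      by simp [marginalsAndCost, funext ha, funext hb]⟩
  · rintro ⟨_, ⟨p, hp, rfl⟩, ⟨_, _, s⟩, ⟨rfl, rfl, hs : 0 ≤ s⟩, h⟩
    obtain ⟨ha, hb, ht⟩ : (_ = a) ∧ (_ = b) ∧ _ + s = t := by
      simpa only [marginalsAndCost, LinearMap.coe_mk, AddHom.coe_mk, Prod.mk_add_mk,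
        Prod.mk.injEq, add_zero] using h
    exact ⟨p, hp, congrFun ha, congrFun hb, by linarith⟩

lemma isClosed_transportEpigraph (w : X × Y → ℝ) : IsClosed (transportEpigraph w) := by
  rw [transportEpigraph_eq_image_add]
  exact (isClosed_singleton.prod (isClosed_singleton.prod isClosed_Ici)).add_left_of_isCompact
    ((isCompact_stdSimplex ℝ _).image (marginalsAndCost w).continuous_of_finiteDimensional)

lemma convex_transportEpigraph (w : X × Y → ℝ) : Convex ℝ (transportEpigraph w) := by
  rw [transportEpigraph_eq_image_add]
  exact ((convex_stdSimplex ℝ _).linear_image _).add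
    ((convex_singleton 0).prod ((convex_singleton 0).prod (convex_Ici 0)))

lemma exists_measure_real_singleton_eq [MeasurableSpace X] [MeasurableSingletonClass X]
    {p : X → ℝ} (hp : p ∈ stdSimplex ℝ X) :
    ∃ π : Measure X, IsProbabilityMeasure π ∧ ∀ x, π.real {x} = p x := by
  have hsum : ∑ x, ENNReal.ofReal (p x) = 1 := by
    rw [← ENNReal.ofReal_sum_of_nonneg fun x _ ↦ hp.1 x, hp.2, ENNReal.ofReal_one]
  refine ⟨(PMF.ofFintype _ hsum).toMeasure, inferInstance, fun x ↦ ?_⟩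
  rw [measureReal_def, PMF.toMeasure_apply_singleton _ _ (measurableSet_singleton x),
    PMF.ofFintype_apply, ENNReal.toReal_ofReal (hp.1 x)]

variable [MeasurableSpace X] [MeasurableSingletonClass X] [MeasurableSpace Y]
  [MeasurableSingletonClass Y]

lemma isCoupling_iff_sum_real {π : Measure (X × Y)} {μ : Measure X} {ν : Measure Y}
    [IsFiniteMeasure π] [IsFiniteMeasure μ] [IsFiniteMeasure ν] :
    IsCoupling π μ ν ↔ (∀ x, ∑ y, π.real {(x, y)} = μ.real {x}) ∧
      ∀ y, ∑ x, π.real {(x, y)} = ν.real {y} := by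
  have hfst (x : X) : ∑ y, π.real {(x, y)} = (π.map Prod.fst).real {x} := by
    rw [map_measureReal_apply measurable_fst (measurableSet_singleton x), measureReal_def,
      measure_preimage_fst_singleton_eq_sum, ENNReal.toReal_sum fun _ _ ↦ measure_ne_top _ _]
    rfl
  have hsnd (y : Y) : ∑ x, π.real {(x, y)} = (π.map Prod.snd).real {y} := by
    rw [map_measureReal_apply measurable_snd (measurableSet_singleton y), measureReal_def,
      measure_preimage_snd_singleton_eq_sum, ENNReal.toReal_sum fun _ _ ↦ measure_ne_top _ _]
    rfl
  simp_rw [hfst, hsnd]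
  constructor
  · exact fun h ↦ ⟨fun x ↦ by rw [h.fst.map_eq], fun y ↦ by rw [h.snd.map_eq]⟩
  · rintro ⟨hμ, hν⟩
    exact ⟨⟨measurable_fst, Measure.ext_of_singleton fun x ↦
        (measureReal_eq_measureReal_iff).1 (hμ x)⟩,
      ⟨measurable_snd, Measure.ext_of_singleton fun y ↦
        (measureReal_eq_measureReal_iff).1 (hν y)⟩⟩

lemma mem_transportEpigraph_iff {μ : Measure X} {ν : Measure Y} [IsProbabilityMeasure μ]
    [IsProbabilityMeasure ν] {w : X × Y → ℝ} {t : ℝ} :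
    (fun x ↦ μ.real {x}, fun y ↦ ν.real {y}, t) ∈ transportEpigraph w ↔
      ∃ π, IsCoupling π μ ν ∧ ∫ z, w z ∂π ≤ t := by
  constructor
  · rintro ⟨p, hp, hμ, hν, ht⟩
    obtain ⟨π, _, rfl : _ = p⟩ : ∃ π : Measure (X × Y), IsProbabilityMeasure π ∧
        (fun z ↦ π.real {z}) = p := by
      simpa only [funext_iff] using exists_measure_real_singleton_eq hp
    exact ⟨π, isCoupling_iff_sum_real.2 ⟨hμ, hν⟩, (integral_fintype .of_finite).trans_le ht⟩
  · rintro ⟨π, hπ, ht⟩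
    have := hπ.isProbabilityMeasure
    obtain ⟨hμ, hν⟩ := isCoupling_iff_sum_real.1 hπ
    exact ⟨fun z ↦ π.real {z}, ⟨fun _ ↦ measureReal_nonneg, by simp⟩, hμ, hν,
      (integral_fintype .of_finite).symm.trans_le ht⟩

variable {α : Type*} [MeasurableSpace α] {κ : Measure α} [IsFiniteMeasure κ] {μ : α → Measure X}

lemma integrable_pi_measureReal_singleton (hμ : AEMeasurable μ κ)
    (hμp : ∀ᵐ v ∂κ, IsProbabilityMeasure (μ v)) :
    Integrable (fun v x ↦ (μ v).real {x}) κ :=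
  .of_eval fun x ↦ integrable_measureReal_apply hμ hμp (measurableSet_singleton x)

lemma integral_pi_measureReal_singleton (hμ : AEMeasurable μ κ)
    (hμp : ∀ᵐ v ∂κ, IsProbabilityMeasure (μ v)) :
    ∫ v, (fun x ↦ (μ v).real {x}) ∂κ = fun x ↦ (κ.bind μ).real {x} := by
  ext x
  rw [eval_integral fun x ↦ integrable_measureReal_apply hμ hμp (measurableSet_singleton x),
    integral_measureReal_apply hμ (hμp.mono fun _ _ ↦ inferInstance) (measurableSet_singleton x)]

end FiniteTransport

section FiniteMixtures

variable {X Y : Type*} [Finite X] [MeasurableSpace X] [MeasurableSingletonClass X] [Finite Y]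
  [MeasurableSpace Y] [MeasurableSingletonClass Y] {α : Type*} [MeasurableSpace α]
  {κ : Measure α} [IsProbabilityMeasure κ] {μ : α → Measure X} {ν : α → Measure Y}

lemma exists_isCoupling_bind_integral_le (hμ : AEMeasurable μ κ) (hν : AEMeasurable ν κ)
    (hμp : ∀ᵐ v ∂κ, IsProbabilityMeasure (μ v)) (hνp : ∀ᵐ v ∂κ, IsProbabilityMeasure (ν v))
    {w : X × Y → ℝ} {g : α → ℝ} (hg : Integrable g κ)
    (h : ∀ᵐ v ∂κ, ∃ π, IsCoupling π (μ v) (ν v) ∧ ∫ z, w z ∂π ≤ g v) :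
    ∃ π, IsCoupling π (κ.bind μ) (κ.bind ν) ∧ ∫ z, w z ∂π ≤ ∫ v, g v ∂κ := by
  have := Fintype.ofFinite X
  have := Fintype.ofFinite Y
  have := isProbabilityMeasure_bind hμ hμp
  have := isProbabilityMeasure_bind hν hνp
  have hμi := integrable_pi_measureReal_singleton hμ hμp
  have hνi := integrable_pi_measureReal_singleton hν hνp
  have hmem : ∀ᵐ v ∂κ, ((fun x ↦ (μ v).real {x}, fun y ↦ (ν v).real {y}, g v) :
      (X → ℝ) × (Y → ℝ) × ℝ) ∈ transportEpigraph w := by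
    filter_upwards [hμp, hνp, h] with v _ _ hv using mem_transportEpigraph_iff.2 hv
  have hint := (convex_transportEpigraph w).integral_mem (isClosed_transportEpigraph w) hmem
    (hμi.prodMk (hνi.prodMk hg))
  rw [integral_pair hμi (hνi.prodMk hg), integral_pair hνi hg,
    integral_pi_measureReal_singleton hμ hμp, integral_pi_measureReal_singleton hν hνp] at hint
  exact mem_transportEpigraph_iff.1 hint

lemma exists_isCoupling_bind_lintegral_le (hμ : AEMeasurable μ κ) (hν : AEMeasurable ν κ)
    (hμp : ∀ᵐ v ∂κ, IsProbabilityMeasure (μ v)) (hνp : ∀ᵐ v ∂κ, IsProbabilityMeasure (ν v))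
    {w : X × Y → ℝ≥0} {g : α → ℝ≥0∞} (hg : AEMeasurable g κ)
    (h : ∀ᵐ v ∂κ, ∃ π, IsCoupling π (μ v) (ν v) ∧ ∫⁻ z, w z ∂π ≤ g v) :
    ∃ π, IsCoupling π (κ.bind μ) (κ.bind ν) ∧ ∫⁻ z, w z ∂π ≤ ∫⁻ v, g v ∂κ := by
  have := isProbabilityMeasure_bind hμ hμp
  have := isProbabilityMeasure_bind hν hνp
  obtain hgtop | hgtop := eq_or_ne (∫⁻ v, g v ∂κ) ⊤
  · exact ⟨(κ.bind μ).prod (κ.bind ν), ⟨measurePreserving_fst, measurePreserving_snd⟩,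
      hgtop ▸ le_top⟩
  have hgfin := ae_lt_top' hg hgtop
  have hreal : ∀ᵐ v ∂κ, ∃ π, IsCoupling π (μ v) (ν v) ∧ ∫ z, (w z : ℝ) ∂π ≤ (g v).toReal := by
    filter_upwards [hμp, hgfin, h] with v _ hgv ⟨π, hπ, hπg⟩
    have := hπ.isProbabilityMeasure
    rw [lintegral_coe_eq_integral _ .of_finite] at hπg
    exact ⟨π, hπ, (ENNReal.ofReal_le_iff_le_toReal hgv.ne).1 hπg⟩
  obtain ⟨π, hπ, hπg⟩ := exists_isCoupling_bind_integral_le hμ hν hμp hνp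
    (integrable_toReal_of_lintegral_ne_top hg hgtop) hreal
  have := hπ.isProbabilityMeasure
  rw [integral_toReal hg hgfin] at hπg
  exact ⟨π, hπ, by rwa [lintegral_coe_eq_integral _ .of_finite,
    ENNReal.ofReal_le_iff_le_toReal hgtop]⟩

lemma exists_isCoupling_bind_eLpNorm_le (hμ : AEMeasurable μ κ) (hν : AEMeasurable ν κ)
    (hμp : ∀ᵐ v ∂κ, IsProbabilityMeasure (μ v)) (hνp : ∀ᵐ v ∂κ, IsProbabilityMeasure (ν v))
    {V : Type*} [NormedAddCommGroup V] {p : ℝ≥0} (hp : p ≠ 0) {f : X × Y → V} {g : α → ℝ≥0∞}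
    (hg : AEMeasurable g κ)
    (h : ∀ᵐ v ∂κ, ∃ π, IsCoupling π (μ v) (ν v) ∧ eLpNorm f p π ≤ g v) :
    ∃ π, IsCoupling π (κ.bind μ) (κ.bind ν) ∧ eLpNorm f p π ≤ eLpNorm g p κ := by
  have hp' : (0 : ℝ) < p := NNReal.coe_pos.2 hp.bot_lt
  have hcost (π : Measure (X × Y)) :
      ∫⁻ z, (‖f z‖₊ ^ (p : ℝ) : ℝ≥0) ∂π = eLpNorm f p π ^ (p : ℝ) := by
    simp_rw [eLpNorm_nnreal_pow_eq_lintegral hp, enorm_eq_nnnorm,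
      ENNReal.coe_rpow_of_nonneg _ hp'.le]
  have hgp : ∫⁻ v, g v ^ (p : ℝ) ∂κ = eLpNorm g p κ ^ (p : ℝ) := by
    simp_rw [eLpNorm_nnreal_pow_eq_lintegral hp, enorm_eq_self]
  have hpow : ∀ᵐ v ∂κ, ∃ π, IsCoupling π (μ v) (ν v) ∧
      ∫⁻ z, (‖f z‖₊ ^ (p : ℝ) : ℝ≥0) ∂π ≤ g v ^ (p : ℝ) := by
    filter_upwards [h] with v ⟨π, hπ, hπg⟩
    exact ⟨π, hπ, (hcost π).trans_le (by gcongr)⟩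
  obtain ⟨π, hπ, hπg⟩ :=
    exists_isCoupling_bind_lintegral_le hμ hν hμp hνp (hg.pow_const _) hpow
  rw [hcost, hgp, ENNReal.rpow_le_rpow_iff hp'] at hπg
  exact ⟨π, hπ, hπg⟩

end FiniteMixtures

lemma exists_isCoupling_bind_eLpNorm_comp_le {α X Y S T V : Type*} [MeasurableSpace α]
    [MeasurableSpace X] [StandardBorelSpace X] [MeasurableSpace Y] [StandardBorelSpace Y]
    [Finite S] [MeasurableSpace S] [MeasurableSingletonClass S]
    [Finite T] [MeasurableSpace T] [MeasurableSingletonClass T] [NormedAddCommGroup V]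
    {κ : Measure α} [IsProbabilityMeasure κ] {μ : α → Measure X} {ν : α → Measure Y}
    (hμ : AEMeasurable μ κ) (hν : AEMeasurable ν κ)
    (hμp : ∀ᵐ v ∂κ, IsProbabilityMeasure (μ v)) (hνp : ∀ᵐ v ∂κ, IsProbabilityMeasure (ν v))
    {p : ℝ≥0} (hp : p ≠ 0) {k : X → S} {l : Y → T} (hk : Measurable k) (hl : Measurable l)
    (f : S × T → V) {g : α → ℝ≥0∞} (hg : AEMeasurable g κ)
    (h : ∀ᵐ v ∂κ, ∃ π, IsCoupling π (μ v) (ν v) ∧ eLpNorm (f ∘ Prod.map k l) p π ≤ g v) :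
    ∃ π, IsCoupling π (κ.bind μ) (κ.bind ν) ∧
      eLpNorm (f ∘ Prod.map k l) p π ≤ eLpNorm g p κ := by
  have := isProbabilityMeasure_bind hμ hμp
  have := isProbabilityMeasure_bind hν hνp
  have hcomp (π : Measure (X × Y)) :
      eLpNorm f p (π.map (Prod.map k l)) = eLpNorm (f ∘ Prod.map k l) p π :=
    eLpNorm_map_measure (StronglyMeasurable.of_discrete).aestronglyMeasurable
      (hk.prodMap hl).aemeasurable
  have hpush : ∀ᵐ v ∂κ, ∃ ρ, IsCoupling ρ ((μ v).map k) ((ν v).map l) ∧ eLpNorm f p ρ ≤ g v := by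
    filter_upwards [h] with v ⟨π, hπ, hπg⟩
    exact ⟨_, hπ.map hk hl, (hcomp π).trans_le hπg⟩
  obtain ⟨ρ, hρ, hρg⟩ := exists_isCoupling_bind_eLpNorm_le
    ((Measure.measurable_map k hk).comp_aemeasurable hμ)
    ((Measure.measurable_map l hl).comp_aemeasurable hν)
    (hμp.mono fun _ _ ↦ Measure.isProbabilityMeasure_map hk.aemeasurable)
    (hνp.mono fun _ _ ↦ Measure.isProbabilityMeasure_map hl.aemeasurable) hp hg hpush
  rw [Function.comp_def, Function.comp_def, ← map_measure_bind hμ hk,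
    ← map_measure_bind hν hl] at hρ
  obtain ⟨π, hπ, rfl⟩ := hρ.exists_map_eq hk hl
  exact ⟨π, hπ, (hcomp π).symm.trans_le hρg⟩

section Wasserstein

variable {E : Type*} [NormedAddCommGroup E] [MeasurableSpace E]

/-- The `p`-Wasserstein distance on a normed group, as an infimum of `Lᵖ` norms over all
couplings, valued in `ℝ≥0∞`. -/
def wasserstein (p : ℝ≥0∞) (μ ν : Measure E) : ℝ≥0∞ :=
  ⨅ (π : Measure (E × E)) (_ : IsCoupling π μ ν), eLpNorm (fun z ↦ z.1 - z.2) p π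

lemma wasserstein_le {p : ℝ≥0∞} {μ ν : Measure E} {π : Measure (E × E)}
    (hπ : IsCoupling π μ ν) : wasserstein p μ ν ≤ eLpNorm (fun z ↦ z.1 - z.2) p π :=
  iInf₂_le π hπ

lemma exists_isCoupling_eLpNorm_le_add {p : ℝ≥0∞} {μ ν : Measure E} [IsProbabilityMeasure μ]
    [IsProbabilityMeasure ν] {a δ : ℝ≥0∞} (h : wasserstein p μ ν ≤ a) (hδ : δ ≠ 0) :
    ∃ π, IsCoupling π μ ν ∧ eLpNorm (fun z ↦ z.1 - z.2) p π ≤ a + δ := by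
  obtain rfl | ha := eq_or_ne a ⊤
  · exact ⟨μ.prod ν, ⟨measurePreserving_fst, measurePreserving_snd⟩, by simp⟩
  · obtain ⟨π, hπ, hlt⟩ : ∃ π, ∃ (_ : IsCoupling π μ ν), _ := by
      simpa only [wasserstein, iInf_lt_iff] using h.trans_lt (ENNReal.lt_add_right ha hδ)
    exact ⟨π, hπ, hlt.le⟩

variable [BorelSpace E] [SecondCountableTopology E] [StandardBorelSpace E]
  {α : Type*} [MeasurableSpace α] {κ : Measure α} [IsProbabilityMeasure κ]
  {μ ν : α → Measure E} {p : ℝ≥0} {g : α → ℝ≥0∞}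

lemma wasserstein_bind_le_eLpNorm_add (hp : 1 ≤ p) (hμ : AEMeasurable μ κ)
    (hν : AEMeasurable ν κ) (hμp : ∀ᵐ v ∂κ, IsProbabilityMeasure (μ v))
    (hνp : ∀ᵐ v ∂κ, IsProbabilityMeasure (ν v)) (hg : AEMeasurable g κ)
    (h : ∀ᵐ v ∂κ, ∃ π, IsCoupling π (μ v) (ν v) ∧ eLpNorm (fun z ↦ z.1 - z.2) p π ≤ g v)
    {Q R : E → E} (hQ : Measurable Q) (hR : Measurable R) (hQfin : (Set.range Q).Finite)
    (hRfin : (Set.range R).Finite) :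
    wasserstein p (κ.bind μ) (κ.bind ν) ≤ eLpNorm g p κ +
      2 * (eLpNorm (id - Q) p (κ.bind μ) + eLpNorm (id - R) p (κ.bind ν)) := by
  have hp' : (1 : ℝ≥0∞) ≤ p := mod_cast hp
  have hp0 : p ≠ 0 := (zero_lt_one.trans_le hp).ne'
  have := hQfin.to_subtype
  have := hRfin.to_subtype
  have hidQ : Measurable (id - Q) := measurable_id.sub hQ
  have hidR : Measurable (id - R) := measurable_id.sub hR
  have hid (m : Measure E) : AEStronglyMeasurable id m := aestronglyMeasurable_id
  set a := fun v ↦ eLpNorm (id - Q) p (μ v)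
  set b := fun v ↦ eLpNorm (id - R) p (ν v)
  have ha : AEMeasurable a κ := aemeasurable_eLpNorm hp0 hμ hidQ
  have hb : AEMeasurable b κ := aemeasurable_eLpNorm hp0 hν hidR
  have hquant : ∀ᵐ v ∂κ, ∃ π, IsCoupling π (μ v) (ν v) ∧
      eLpNorm (fun z ↦ Q z.1 - R z.2) p π ≤ (a + g + b) v := by
    filter_upwards [h] with v ⟨π, hπ, hπg⟩
    refine ⟨π, hπ, (hπ.eLpNorm_sub_le hp' hQ.aestronglyMeasurable (hid _) hR.aestronglyMeasurable
      (hid _)).trans ?_⟩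
    simp only [Pi.add_apply]
    rw [eLpNorm_sub_comm Q, eLpNorm_sub_comm R]
    gcongr
    exact hπg
  obtain ⟨π, hπ, hπg⟩ := exists_isCoupling_bind_eLpNorm_comp_le hμ hν hμp hνp hp0
    hQ.rangeFactorization hR.rangeFactorization (fun z ↦ (z.1 : E) - z.2)
    ((ha.add hg).add hb) hquant
  have hπ' := hπ.eLpNorm_sub_le hp' (hid _) hQ.aestronglyMeasurable (hid _) hR.aestronglyMeasurable
  have hsum : eLpNorm (a + g + b) p κ ≤ eLpNorm a p κ + eLpNorm g p κ + eLpNorm b p κ := by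
    refine (eLpNorm_add_le (ha.add hg).aestronglyMeasurable hb.aestronglyMeasurable hp').trans ?_
    gcongr
    exact eLpNorm_add_le ha.aestronglyMeasurable hg.aestronglyMeasurable hp'
  calc wasserstein p (κ.bind μ) (κ.bind ν)
      ≤ _ := (wasserstein_le hπ).trans hπ'
    _ ≤ eLpNorm (id - Q) p (κ.bind μ) + (eLpNorm a p κ + eLpNorm g p κ + eLpNorm b p κ) +
          eLpNorm (id - R) p (κ.bind ν) := by gcongr; exact hπg.trans hsum
    _ = _ := by
      rw [eLpNorm_eLpNorm_eq_eLpNorm_bind hp0 hμ hidQ, eLpNorm_eLpNorm_eq_eLpNorm_bind hp0 hν hidR]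
      ring

theorem wasserstein_bind_le (hp : 1 ≤ p) (hμ : AEMeasurable μ κ) (hν : AEMeasurable ν κ)
    (hμp : ∀ᵐ v ∂κ, IsProbabilityMeasure (μ v)) (hνp : ∀ᵐ v ∂κ, IsProbabilityMeasure (ν v))
    (hμL : MemLp id p (κ.bind μ)) (hνL : MemLp id p (κ.bind ν)) (hg : AEMeasurable g κ)
    (h : ∀ᵐ v ∂κ, wasserstein p (μ v) (ν v) ≤ g v) :
    wasserstein p (κ.bind μ) (κ.bind ν) ≤ eLpNorm g p κ := by
  have hp' : (1 : ℝ≥0∞) ≤ p := mod_cast hp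
  refine ENNReal.le_of_forall_pos_le_add fun ε hε _ ↦ ?_
  set δ : ℝ≥0∞ := ε / 5
  have hδ : δ ≠ 0 := by simp [δ, hε.ne']
  obtain ⟨Q, hQ, -⟩ := hμL.exists_simpleFunc_eLpNorm_sub_lt coe_ne_top hδ
  obtain ⟨R, hR, -⟩ := hνL.exists_simpleFunc_eLpNorm_sub_lt coe_ne_top hδ
  have hnear : ∀ᵐ v ∂κ, ∃ π, IsCoupling π (μ v) (ν v) ∧
      eLpNorm (fun z ↦ z.1 - z.2) p π ≤ g v + δ := by
    filter_upwards [hμp, hνp, h] with v _ _ hv using exists_isCoupling_eLpNorm_le_add hv hδ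
  have hgδ : eLpNorm (g + fun _ ↦ δ) p κ ≤ eLpNorm g p κ + δ := by
    refine (eLpNorm_add_le hg.aestronglyMeasurable aestronglyMeasurable_const hp').trans_eq ?_
    rw [eLpNorm_const _ (zero_lt_one.trans_le hp').ne' (IsProbabilityMeasure.ne_zero κ)]
    simp
  have hquant := wasserstein_bind_le_eLpNorm_add hp hμ hν hμp hνp (hg.add aemeasurable_const)
    hnear Q.measurable R.measurable Q.finite_range R.finite_range
  calc wasserstein p (κ.bind μ) (κ.bind ν)
      ≤ _ := hquant
    _ ≤ eLpNorm g p κ + δ + 2 * (δ + δ) := by gcongr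
    _ = eLpNorm g p κ + 5 * δ := by ring
    _ = eLpNorm g p κ + ε := by rw [ENNReal.mul_div_cancel (by norm_num) (by norm_num)]

end Wasserstein

section UpperLintegral

variable {α : Type*} [MeasurableSpace α] {m m' : Measure α} {f : α → ℝ≥0∞}

lemma upperLintegral_le {g : α → ℝ≥0∞} (hg : Measurable g) (hfg : ∀ x, f x ≤ g x) :
    upperLintegral m f ≤ ∫⁻ x, g x ∂m :=
  (iInf₂_le g hg).trans (iInf_le _ hfg)

lemma upperLintegral_le_mul_of_le_smul {C : ℝ≥0∞} (hC : C ≠ ⊤) (h : m' ≤ C • m) :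
    upperLintegral m' f ≤ C * upperLintegral m f := by
  obtain rfl | hC₀ := eq_or_ne C 0
  · obtain rfl : m' = 0 := by simpa [Measure.nonpos_iff_eq_zero'] using h
    simpa using upperLintegral_le (m := 0) measurable_const (g := ⊤) fun _ ↦ le_top
  · simp only [upperLintegral, ENNReal.mul_iInf_of_ne hC₀ hC]
    refine iInf_mono fun g ↦ iInf_mono fun _ ↦ iInf_mono fun _ ↦ ?_
    simpa only [lintegral_smul_measure, smul_eq_mul] using lintegral_mono' h le_rfl

lemma upperLintegral_restrict_le_mul {s : Set α} (hs : MeasurableSet s) {a : ℝ≥0∞}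
    (h : ∀ x ∈ s, f x ≤ a) : upperLintegral (m.restrict s) f ≤ a * m s := by
  classical
  calc upperLintegral (m.restrict s) f
      ≤ ∫⁻ x in s, s.piecewise (fun _ ↦ a) ⊤ x ∂m := by
        refine upperLintegral_le (measurable_const.piecewise hs measurable_const) fun x ↦ ?_
        by_cases hx : x ∈ s <;> simp [hx, h]
    _ = ∫⁻ _ in s, a ∂m := setLIntegral_congr_fun hs fun x hx ↦ by simp [hx]
    _ = a * m s := by simp

end UpperLintegral

lemma setLIntegral_lt_top_of_biSup_lt_top {α : Type*} [MeasurableSpace α] {m : Measure α}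
    {s : Set α} (hs : m s ≠ ⊤) {f : α → ℝ≥0∞} (hf : ⨆ x ∈ s, f x < ⊤) :
    ∫⁻ x in s, f x ∂m < ⊤ :=
  setLIntegral_lt_top_of_le_nnreal hs ⟨_, fun x hx ↦
    (le_iSup₂ (f := fun x (_ : x ∈ s) ↦ f x) x hx).trans_eq (coe_toNNReal hf.ne).symm⟩

lemma eLpNorm_two_sq_eq_lintegral {α V : Type*} [MeasurableSpace α] [ENorm V] (f : α → V)
    (m : Measure α) : eLpNorm f 2 m ^ 2 = ∫⁻ x, ‖f x‖ₑ ^ 2 ∂m := by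
  simpa using eLpNorm_nnreal_pow_eq_lintegral (f := f) (μ := m) two_ne_zero

section SquaredWasserstein

variable {E : Type*} [NormedAddCommGroup E] [MeasurableSpace E]

lemma W2sq_eq_wasserstein_sq (μ ν : Measure E) [IsProbabilityMeasure μ] :
    W2sq μ ν = wasserstein 2 μ ν ^ 2 := by
  have hsq : wasserstein 2 μ ν ^ 2 = ⨅ (π) (_ : IsCoupling π μ ν),
      ∫⁻ z, ‖z.1 - z.2‖ₑ ^ 2 ∂π := by
    simpa only [wasserstein, orderIsoRpow_apply, rpow_two, eLpNorm_two_sq_eq_lintegral] using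
      (orderIsoRpow 2 two_pos).map_iInf₂ fun π (_ : IsCoupling π μ ν) ↦
        eLpNorm (fun z : E × E ↦ z.1 - z.2) 2 π
  rw [hsq, W2sq]
  refine iInf_congr fun π ↦ le_antisymm (le_iInf fun hπ ↦ ?_)
    (le_iInf fun _ ↦ le_iInf₂ fun hfst hsnd ↦ iInf_le _ ⟨⟨measurable_fst, hfst⟩,
      measurable_snd, hsnd⟩)
  exact (iInf_le _ hπ.isProbabilityMeasure).trans (iInf₂_le hπ.fst.map_eq hπ.snd.map_eq)

variable [BorelSpace E] [SecondCountableTopology E] {α : Type*} [MeasurableSpace α]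
  {κ m : Measure α} {μ ν : α → Measure E}

lemma memLp_two_id_bind (hμ : AEMeasurable μ κ)
    (h : ∫⁻ v, ∫⁻ x, (‖x‖₊ : ℝ≥0∞) ^ 2 ∂μ v ∂κ < ⊤) : MemLp id 2 (κ.bind μ) := by
  refine ⟨aestronglyMeasurable_id, ?_⟩
  have hsq : eLpNorm id 2 (κ.bind μ) ^ 2 < ⊤ := by
    rw [eLpNorm_two_sq_eq_lintegral, Measure.lintegral_bind hμ (by fun_prop)]
    exact h
  simpa using hsq

variable [StandardBorelSpace E] [IsProbabilityMeasure κ]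

lemma W2sq_bind_le_upperLintegral (hμ : AEMeasurable μ κ) (hν : AEMeasurable ν κ)
    (hμp : ∀ᵐ v ∂κ, IsProbabilityMeasure (μ v)) (hνp : ∀ᵐ v ∂κ, IsProbabilityMeasure (ν v))
    (hμL : MemLp id 2 (κ.bind μ)) (hνL : MemLp id 2 (κ.bind ν)) :
    W2sq (κ.bind μ) (κ.bind ν) ≤ upperLintegral κ fun v ↦ W2sq (μ v) (ν v) := by
  have := isProbabilityMeasure_bind hμ hμp
  refine le_iInf₂ fun g hg ↦ le_iInf fun hgW ↦ ?_
  have hroot : ∀ᵐ v ∂κ, wasserstein 2 (μ v) (ν v) ≤ g v ^ (2⁻¹ : ℝ) := by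
    filter_upwards [hμp] with v _
    rw [ENNReal.le_rpow_inv_iff two_pos, ENNReal.rpow_two, ← W2sq_eq_wasserstein_sq]
    exact hgW v
  calc W2sq (κ.bind μ) (κ.bind ν) = wasserstein 2 (κ.bind μ) (κ.bind ν) ^ 2 :=
        W2sq_eq_wasserstein_sq _ _
    _ ≤ eLpNorm (fun v ↦ g v ^ (2⁻¹ : ℝ)) 2 κ ^ 2 := by
        gcongr
        exact wasserstein_bind_le (p := 2) one_le_two hμ hν hμp hνp hμL hνL
          (hg.pow_const _).aemeasurable hroot
    _ = ∫⁻ v, g v ∂κ := by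
        simp_rw [eLpNorm_two_sq_eq_lintegral, enorm_eq_self, ← ENNReal.rpow_two,
          ENNReal.rpow_inv_rpow two_ne_zero]

lemma W2sq_bind_le_mul_upperLintegral {C : ℝ≥0∞} (hC : C ≠ ⊤) (hκ : κ ≤ C • m)
    (hμ : AEMeasurable μ m) (hν : AEMeasurable ν m)
    (hμp : ∀ᵐ v ∂m, IsProbabilityMeasure (μ v)) (hνp : ∀ᵐ v ∂m, IsProbabilityMeasure (ν v))
    (hμ₂ : ∫⁻ v, ∫⁻ x, (‖x‖₊ : ℝ≥0∞) ^ 2 ∂μ v ∂m < ⊤)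
    (hν₂ : ∫⁻ v, ∫⁻ x, (‖x‖₊ : ℝ≥0∞) ^ 2 ∂ν v ∂m < ⊤) :
    W2sq (κ.bind μ) (κ.bind ν) ≤ C * upperLintegral m fun v ↦ W2sq (μ v) (ν v) := by
  have hκm := Measure.absolutelyContinuous_of_le_smul hκ
  have hmoment {f : α → ℝ≥0∞} (hf : ∫⁻ v, f v ∂m < ⊤) : ∫⁻ v, f v ∂κ < ⊤ :=
    (lintegral_mono' hκ le_rfl).trans_lt
      (by simpa only [lintegral_smul_measure, smul_eq_mul] using ENNReal.mul_lt_top hC.lt_top hf)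
  exact (W2sq_bind_le_upperLintegral (hμ.mono_ac hκm) (hν.mono_ac hκm) (hκm.ae_le hμp)
    (hκm.ae_le hνp) (memLp_two_id_bind (hμ.mono_ac hκm) (hmoment hμ₂))
    (memLp_two_id_bind (hν.mono_ac hκm) (hmoment hν₂))).trans
    (upperLintegral_le_mul_of_le_smul hC hκ)

end SquaredWasserstein

section Graphon

/-- The law of a random neighbour of the vertex `u` of the graphon `G`: the measure on `[0,1]`
with density `G̃(u, ·)`, under which `[Gμ]^u` is the mixture of the family `μ`. -/
def neighbourLaw (G : ℝ → ℝ → ℝ) (u : ℝ) : Measure ℝ :=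
  (volume.restrict (Set.Icc 0 1)).withDensity fun v ↦ ENNReal.ofReal (gnorm G u v)

variable {G : ℝ → ℝ → ℝ} {u c M : ℝ}

lemma aemeasurable_gnorm (hdeg : 0 < ∫ v in Set.Icc (0 : ℝ) 1, G u v) :
    AEMeasurable (gnorm G u) (volume.restrict (Set.Icc 0 1)) :=
  (Integrable.of_integral_ne_zero hdeg.ne').aemeasurable.div_const _

lemma isProbabilityMeasure_neighbourLaw (hG : ∀ v, 0 ≤ G u v)
    (hdeg : 0 < ∫ v in Set.Icc (0 : ℝ) 1, G u v) : IsProbabilityMeasure (neighbourLaw G u) := by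
  have hint : Integrable (gnorm G u) (volume.restrict (Set.Icc 0 1)) :=
    (Integrable.of_integral_ne_zero hdeg.ne').div_const _
  refine ⟨?_⟩
  rw [neighbourLaw, withDensity_apply _ .univ, Measure.restrict_univ,
    ← ofReal_integral_eq_lintegral_ofReal hint (.of_forall fun v ↦ div_nonneg (hG v) hdeg.le)]
  simp_rw [gnorm, integral_div, div_self hdeg.ne', ENNReal.ofReal_one]

lemma neighbourLaw_le (hc : 0 < c) (hG : ∀ v, 0 ≤ G u v) (hGM : ∀ v, G u v ≤ M)
    (hdeg : c ≤ ∫ v in Set.Icc (0 : ℝ) 1, G u v) :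
    neighbourLaw G u ≤ ENNReal.ofReal (M / c) • volume.restrict (Set.Icc 0 1) := by
  rw [← withDensity_const]
  refine withDensity_mono (.of_forall fun v ↦ ENNReal.ofReal_le_ofReal ?_)
  exact div_le_div₀ ((hG v).trans (hGM v)) (hGM v) hc hdeg

variable {E : Type*} [MeasurableSpace E] {μ aggμ : ℝ → Measure E}

lemma IsGraphonAggregate.eq_bind (hagg : IsGraphonAggregate G μ aggμ)
    (hμ : AEMeasurable μ (volume.restrict (Set.Icc 0 1))) (hu : u ∈ Set.Icc (0 : ℝ) 1)
    (hdeg : 0 < ∫ v in Set.Icc (0 : ℝ) 1, G u v) : aggμ u = (neighbourLaw G u).bind μ := by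
  ext B hB
  have hμB : AEMeasurable (fun v ↦ μ v B) (volume.restrict (Set.Icc 0 1)) :=
    (Measure.measurable_coe hB).comp_aemeasurable hμ
  rw [(hagg u hu).2 B hB, neighbourLaw,
    Measure.bind_apply hB (hμ.mono_ac (withDensity_absolutelyContinuous _ _)),
    lintegral_withDensity_eq_lintegral_mul₀ (aemeasurable_gnorm hdeg).ennreal_ofReal hμB]
  rfl

end Graphon

theorem graphon_aggregate_W2_L2_stability_general {E : Type*} [NormedAddCommGroup E]
    [MeasurableSpace E] [BorelSpace E] [SecondCountableTopology E] [StandardBorelSpace E]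
    {G : ℝ → ℝ → ℝ} {M c : ℝ} (hc : 0 < c) (hG : ∀ u v, 0 ≤ G u v) (hGM : ∀ u v, G u v ≤ M)
    (hdeg : ∀ u ∈ Set.Icc (0 : ℝ) 1, c ≤ ∫ v in Set.Icc (0 : ℝ) 1, G u v)
    {μ ν aggμ aggν : ℝ → Measure E}
    (hμp : ∀ u ∈ Set.Icc (0 : ℝ) 1, IsProbabilityMeasure (μ u))
    (hνp : ∀ u ∈ Set.Icc (0 : ℝ) 1, IsProbabilityMeasure (ν u))
    (hμ : ∀ B, MeasurableSet B → AEMeasurable (fun u ↦ μ u B) (volume.restrict (Set.Icc 0 1)))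
    (hν : ∀ B, MeasurableSet B → AEMeasurable (fun u ↦ ν u B) (volume.restrict (Set.Icc 0 1)))
    (hμ₂ : ∫⁻ u in Set.Icc 0 1, ∫⁻ x, (‖x‖₊ : ℝ≥0∞) ^ 2 ∂μ u < ⊤)
    (hν₂ : ∫⁻ u in Set.Icc 0 1, ∫⁻ x, (‖x‖₊ : ℝ≥0∞) ^ 2 ∂ν u < ⊤)
    (haggμ : IsGraphonAggregate G μ aggμ) (haggν : IsGraphonAggregate G ν aggν) :
    upperLintegral (volume.restrict (Set.Icc 0 1)) (fun u ↦ W2sq (aggμ u) (aggν u)) ≤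
      ENNReal.ofReal (M / c) *
        upperLintegral (volume.restrict (Set.Icc 0 1)) fun u ↦ W2sq (μ u) (ν u) := by
  have hμp' := ae_restrict_of_forall_mem (μ := volume) measurableSet_Icc hμp
  have hνp' := ae_restrict_of_forall_mem (μ := volume) measurableSet_Icc hνp
  have hμ' := aemeasurable_of_forall_aemeasurable_apply (hμp'.mono fun _ _ ↦ inferInstance) hμ
  have hν' := aemeasurable_of_forall_aemeasurable_apply (hνp'.mono fun _ _ ↦ inferInstance) hν
  refine (upperLintegral_restrict_le_mul measurableSet_Icc fun u hu ↦ ?_).trans_eq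
    (by rw [Real.volume_Icc, sub_zero, ENNReal.ofReal_one, mul_one])
  have hdeg' := hc.trans_le (hdeg u hu)
  have := isProbabilityMeasure_neighbourLaw (hG u) hdeg'
  rw [haggμ.eq_bind hμ' hu hdeg', haggν.eq_bind hν' hu hdeg']
  exact W2sq_bind_le_mul_upperLintegral ENNReal.ofReal_ne_top
    (neighbourLaw_le hc (hG u) (hGM u) (hdeg u hu)) hμ' hν' hμp' hνp' hμ₂ hν₂

/-- **L² stability of the graphon aggregation operator in Wasserstein distance**:
`∫₀¹ W₂²([Gμ]^u, [Gν]^u) du ≤ C ∫₀¹ W₂²(μ^u, ν^u) du`, with `C` depending only on the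
uniform bound `M` of the graphon and the lower degree bound `c`. -/
theorem graphon_aggregate_W2_L2_stability
    (d : ℕ) (M c : ℝ) (hc : 0 < c) :
    ∃ C : ℝ, 0 < C ∧
      ∀ G : ℝ → ℝ → ℝ,
        Measurable (Function.uncurry G) →
        (∀ u v, G u v = G v u) →
        (∀ u v, 0 ≤ G u v) →
        (∀ u v, G u v ≤ M) →
        (∀ u ∈ Set.Icc (0:ℝ) 1, c ≤ ∫ v in Set.Icc (0:ℝ) 1, G u v) →
        ∀ μ ν : ℝ → Measure (EuclideanSpace ℝ (Fin d)),
          (∀ u ∈ Set.Icc (0:ℝ) 1, IsProbabilityMeasure (μ u)) →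
          (∀ u ∈ Set.Icc (0:ℝ) 1, IsProbabilityMeasure (ν u)) →
          (∀ B : Set (EuclideanSpace ℝ (Fin d)), MeasurableSet B →
            AEMeasurable (fun u => μ u B) (volume.restrict (Set.Icc (0:ℝ) 1))) →
          (∀ B : Set (EuclideanSpace ℝ (Fin d)), MeasurableSet B →
            AEMeasurable (fun u => ν u B) (volume.restrict (Set.Icc (0:ℝ) 1))) →
          (⨆ u ∈ Set.Icc (0:ℝ) 1, ∫⁻ x, (‖x‖₊ : ℝ≥0∞) ^ 2 ∂(μ u)) < ⊤ →
          (⨆ u ∈ Set.Icc (0:ℝ) 1, ∫⁻ x, (‖x‖₊ : ℝ≥0∞) ^ 2 ∂(ν u)) < ⊤ →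
          ∀ aggμ aggν : ℝ → Measure (EuclideanSpace ℝ (Fin d)),
            IsGraphonAggregate G μ aggμ → IsGraphonAggregate G ν aggν →
            upperLintegral (volume.restrict (Set.Icc (0:ℝ) 1))
                (fun u => W2sq (aggμ u) (aggν u)) ≤
              ENNReal.ofReal C *
                upperLintegral (volume.restrict (Set.Icc (0:ℝ) 1))
                  (fun u => W2sq (μ u) (ν u)) := by
  refine ⟨max (M / c) 1, by positivity, fun G _ _ hG hGM hdeg μ ν hμp hνp hμ hν hμ₂ hν₂ aggμ aggν
    haggμ haggν ↦ (graphon_aggregate_W2_L2_stability_general hc hG hGM hdeg hμp hνp hμ hν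
      (setLIntegral_lt_top_of_biSup_lt_top (by simp) hμ₂)
      (setLIntegral_lt_top_of_biSup_lt_top (by simp) hν₂) haggμ haggν).trans ?_⟩
  gcongr
  exact le_max_left _ _

end
end

section
/- Let G : [0,1]×[0,1] → [0,∞) be measurable and symmetric with 0 < ∫₀¹ G(u,v) dv < ∞ for every u ∈ [0,1] (no uniform bounds assumed), and let (μ^u)_{u∈[0,1]} and (ν^u)_{u∈[0,1]} be setwise measurable families of Borel probability measures on ℝ^d with sup_{u∈[0,1]} ∫ |x|² dμ^u(x) < ∞ and sup_{u∈[0,1]} ∫ |x|² dν^u(x) < ∞. Then sup_{u∈[0,1]} W₂([Gμ]^u, [Gν]^u) ≤ sup_{u∈[0,1]} W₂(μ^u, ν^u). -/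
/-!
The law `[Gμ]^u` is the mixture of the `μ^v` under the probability measure `G̃(u,v) dv`, and mixing
almost optimal couplings of `μ^v` and `ν^v` would couple `[Gμ]^u` and `[Gν]^u` at no greater
cost, were it not that the couplings must be chosen measurably in `v`. Convexity replaces the
selection: for finitely many functions `gᵢ ≥ 0`, the vectors dominating `(∫ gᵢ dπ)ᵢ` for some
probability measure `π` form a convex set, and the mean of a random vector in a convex set of `ℝⁿ`
lies in its closure. Hence, if for almost every `v` some `π` satisfies `∫ gᵢ dπ ≤ hᵢ(v)` for all
`i`, then a single `π` satisfies `∫ gᵢ dπ ≤ 𝔼 hᵢ + ε` for all `i`.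

For lower semicontinuous `gᵢ` this passes to infinitely many constraints and `ε = 0` by compactness,
as soon as one constraint is coercive. The mixtures are tight, so there are `ψ`, `ψ'` tending
to infinity with finite integrals against them, and `ψ(x) + ψ'(y)` is such a constraint. The cost
and all functions `f(x) + f'(y)` with `f`, `f'` lower semicontinuous are the remaining constraints;
testing indicators of open sets, the marginals of `π` lie below the mixtures on open sets, and so
agree with them because all are probability measures.
-/

open MeasureTheory ENNReal

noncomputable section

/-- The 2-Wasserstein distance (valued in `ℝ≥0∞`). -/
def W2 {E : Type*} [NormedAddCommGroup E] [MeasurableSpace E]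
    (μ ν : Measure E) : ℝ≥0∞ :=
  (W2sq μ ν) ^ (1/2 : ℝ)

section AggregateStability

open Filter Set TopologicalSpace
open scoped NNReal Topology

section Mixtures

variable {Ω X ι : Type*} [MeasurableSpace Ω] [MeasurableSpace X]

theorem aemeasurable_measure_of_forall_aemeasurable [MeasurableSpace.CountablyGenerated X]
    {P : Measure Ω} {μ : Ω → Measure X} (hfin : ∀ᵐ ω ∂P, IsFiniteMeasure (μ ω))
    (hμ : ∀ B, MeasurableSet B → AEMeasurable (fun ω => μ ω B) P) : AEMeasurable μ P := by
  let S := generateSetAlgebra (MeasurableSpace.countableGeneratingSet X)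
  have hS_alg : IsSetAlgebra S := isSetAlgebra_generateSetAlgebra
  have hS_gen : ‹MeasurableSpace X› = .generateFrom S := by
    rw [generateFrom_generateSetAlgebra_eq, MeasurableSpace.generateFrom_countableGeneratingSet]
  have hS_countable : Countable S :=
    countable_generateSetAlgebra MeasurableSpace.countable_countableGeneratingSet
  have hS_meas : ∀ s : S, MeasurableSet (s : Set X) := fun s => by
    rw [hS_gen]
    exact MeasurableSpace.measurableSet_generateFrom s.2
  obtain ⟨t, ht_ae, ht, hgood⟩ := (hfin.and (ae_all_iff.2 fun s : S =>
    (hμ s (hS_meas s)).ae_eq_mk)).exists_measurable_mem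
  have : ∀ ω, IsFiniteMeasure (t.indicator μ ω) := fun ω => by
    by_cases hω : ω ∈ t
    · rw [indicator_of_mem hω]
      exact (hgood ω hω).1
    · rw [indicator_of_notMem hω]
      infer_instance
  have hbasic : ∀ s ∈ S, Measurable fun ω => t.indicator μ ω s := fun s hs => by
    convert (hμ s (hS_meas ⟨s, hs⟩)).measurable_mk.indicator ht using 2 with ω
    by_cases hω : ω ∈ t
    · simpa only [indicator_of_mem hω] using (hgood ω hω).2 ⟨s, hs⟩
    · simp only [indicator_of_notMem hω, Measure.coe_zero, Pi.zero_apply]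
  refine ⟨t.indicator μ, .measure_of_isPiSystem hS_gen (fun s hs t ht _ => hS_alg.inter_mem hs ht)
    hbasic (hbasic _ hS_alg.univ_mem), ?_⟩
  filter_upwards [ht_ae] with ω hω
  exact (indicator_of_mem hω μ).symm

/-- The vectors dominating `(∫ gᵢ dπ)ᵢ` for some probability measure `π`: a convex set, in which
the existence of a `π` meeting the bounds `yᵢ` becomes membership of `y`. The coordinates are real
and nonnegative rather than in `ℝ≥0∞`, so that vectors can be averaged by the Bochner integral. -/
def lintegralEpigraph (g : ι → X → ℝ≥0∞) : Set (ι → ℝ) :=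
  {y | ∃ π : ProbabilityMeasure X, ∀ i, 0 ≤ y i ∧ ∫⁻ x, g i x ∂π ≤ ENNReal.ofReal (y i)}

theorem convex_lintegralEpigraph (g : ι → X → ℝ≥0∞) : Convex ℝ (lintegralEpigraph g) := by
  rintro y ⟨π, hy⟩ z ⟨ρ, hz⟩ a b ha hb hab
  have hprob : IsProbabilityMeasure
      (ENNReal.ofReal a • (π : Measure X) + ENNReal.ofReal b • (ρ : Measure X)) :=
    ⟨by simp [← ENNReal.ofReal_add ha hb, hab]⟩
  refine ⟨⟨_, hprob⟩, fun i => ⟨?_, ?_⟩⟩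
  · exact add_nonneg (mul_nonneg ha (hy i).1) (mul_nonneg hb (hz i).1)
  · calc ∫⁻ x, g i x ∂(ENNReal.ofReal a • (π : Measure X) + ENNReal.ofReal b • (ρ : Measure X))
        = ENNReal.ofReal a * ∫⁻ x, g i x ∂π + ENNReal.ofReal b * ∫⁻ x, g i x ∂ρ := by
          simp only [lintegral_add_measure, lintegral_smul_measure, smul_eq_mul]
      _ ≤ ENNReal.ofReal a * ENNReal.ofReal (y i) + ENNReal.ofReal b * ENNReal.ofReal (z i) := by
          gcongr
          exacts [(hy i).2, (hz i).2]
      _ = ENNReal.ofReal ((a • y + b • z) i) := by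
          rw [← ENNReal.ofReal_mul ha, ← ENNReal.ofReal_mul hb,
            ← ENNReal.ofReal_add (mul_nonneg ha (hy i).1) (mul_nonneg hb (hz i).1)]
          rfl

theorem exists_forall_lintegral_le_lintegral_add [Finite ι] (P : Measure Ω)
    [IsProbabilityMeasure P] {g : ι → X → ℝ≥0∞} {h : ι → Ω → ℝ≥0∞}
    (hmeas : ∀ i, AEMeasurable (h i) P) (hfin : ∀ i, ∫⁻ ω, h i ω ∂P ≠ ⊤)
    (hgh : ∀ᵐ ω ∂P, ∃ π : ProbabilityMeasure X, ∀ i, ∫⁻ x, g i x ∂π ≤ h i ω)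
    {ε : ℝ≥0} (hε : 0 < ε) :
    ∃ π : ProbabilityMeasure X, ∀ i, ∫⁻ x, g i x ∂π ≤ ∫⁻ ω, h i ω ∂P + ε := by
  have := Fintype.ofFinite ι
  have hlt : ∀ᵐ ω ∂P, ∀ i, h i ω < ⊤ := ae_all_iff.2 fun i => ae_lt_top' (hmeas i) (hfin i)
  have hint : ∀ i, Integrable (fun ω => (h i ω).toReal) P := fun i =>
    integrable_toReal_of_lintegral_ne_top (hmeas i) (hfin i)
  have hmean : ∫ ω, (fun i => (h i ω).toReal) ∂P ∈ closure (lintegralEpigraph g) := by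
    refine (convex_lintegralEpigraph g).closure.integral_mem isClosed_closure ?_
      (Integrable.of_eval hint)
    filter_upwards [hgh, hlt] with ω ⟨π, hπ⟩ hω
    refine subset_closure ⟨π, fun i => ⟨ENNReal.toReal_nonneg, ?_⟩⟩
    rw [ENNReal.ofReal_toReal (hω i).ne]
    exact hπ i
  obtain ⟨y, ⟨π, hπ⟩, hy⟩ := Metric.mem_closure_iff.1 hmean ε hε
  refine ⟨π, fun i => (hπ i).2.trans ?_⟩
  have hyi : y i ≤ ∫ ω, (h i ω).toReal ∂P + ε := by
    have := (dist_le_pi_dist _ y i).trans_lt hy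
    rw [eval_integral hint, Real.dist_eq, abs_lt] at this
    linarith
  calc ENNReal.ofReal (y i) ≤ ENNReal.ofReal (∫ ω, (h i ω).toReal ∂P) + ε := by
        rw [← ENNReal.ofReal_coe_nnreal]
        exact (ENNReal.ofReal_le_ofReal hyi).trans ENNReal.ofReal_add_le
    _ = ∫⁻ ω, h i ω ∂P + ε := by
        rw [integral_toReal (hmeas i) (hlt.mono fun ω hω => hω i), ENNReal.ofReal_toReal (hfin i)]

theorem exists_forall_lintegral_le_lintegral [TopologicalSpace X] [OpensMeasurableSpace X]
    (P : Measure Ω) [IsProbabilityMeasure P] {g : ι → X → ℝ≥0∞} {h : ι → Ω → ℝ≥0∞}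
    (hlsc : ∀ i, LowerSemicontinuous fun π : ProbabilityMeasure X => ∫⁻ x, g i x ∂π)
    (hmeas : ∀ i, AEMeasurable (h i) P)
    (hgh : ∀ᵐ ω ∂P, ∃ π : ProbabilityMeasure X, ∀ i, ∫⁻ x, g i x ∂π ≤ h i ω)
    {i₀ : ι} (hi₀ : ∫⁻ ω, h i₀ ω ∂P ≠ ⊤)
    (hcompact : ∀ r ≠ ⊤, IsCompact {π : ProbabilityMeasure X | ∫⁻ x, g i₀ x ∂π ≤ r}) :
    ∃ π : ProbabilityMeasure X, ∀ i, ∫⁻ x, g i x ∂π ≤ ∫⁻ ω, h i ω ∂P := by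
  let C : {i // ∫⁻ ω, h i ω ∂P ≠ ⊤} × {ε : ℝ≥0 // 0 < ε} → Set (ProbabilityMeasure X) :=
    fun q => {π | ∫⁻ x, g q.1 x ∂π ≤ ∫⁻ ω, h q.1 ω ∂P + (q.2 : ℝ≥0)}
  have hC_closed : ∀ q, IsClosed (C q) := fun q => (hlsc q.1).isClosed_preimage _
  have hC_finite : ∀ s : Finset _,
      (C (⟨i₀, hi₀⟩, ⟨1, one_pos⟩) ∩ ⋂ q ∈ s, C q).Nonempty := by
    intro s
    classical
    let t := insert (⟨i₀, hi₀⟩, ⟨1, one_pos⟩) s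
    obtain ⟨ε, hε, hεt⟩ : ∃ ε : ℝ≥0, 0 < ε ∧ ∀ q ∈ t, ε ≤ q.2 := by
      obtain ⟨q₀, -, hq₀⟩ := t.exists_min_image (fun q => q.2) (Finset.insert_nonempty _ _)
      exact ⟨q₀.2, q₀.2.2, hq₀⟩
    obtain ⟨π, hπ⟩ := exists_forall_lintegral_le_lintegral_add P
      (g := fun q : t => g q.1.1) (h := fun q : t => h q.1.1) (fun q => hmeas _)
      (fun q => q.1.1.2) (hgh.mono fun ω ⟨π, hπ⟩ => ⟨π, fun q => hπ _⟩) hε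
    have hπC : ∀ q ∈ t, π ∈ C q := fun q hq =>
      (hπ ⟨q, hq⟩).trans (add_le_add_right (ENNReal.coe_le_coe.2 (hεt q hq)) _)
    exact ⟨π, hπC _ (Finset.mem_insert_self _ _),
      mem_iInter₂.2 fun q hq => hπC q (Finset.mem_insert_of_mem hq)⟩
  obtain ⟨π, -, hπ⟩ :=
    (hcompact _ (ENNReal.add_ne_top.2 ⟨hi₀, ENNReal.coe_ne_top⟩)).inter_iInter_nonempty
      C hC_closed hC_finite
  refine ⟨π, fun i => ENNReal.le_of_forall_pos_le_add fun ε hε hi => ?_⟩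
  exact mem_iInter.1 hπ (⟨i, hi.ne⟩, ⟨ε, hε⟩)

end Mixtures

theorem tendsto_fst_add_snd_cocompact {X Y : Type*} [TopologicalSpace X] [TopologicalSpace Y]
    {ψ : X → ℝ≥0∞} {ψ' : Y → ℝ≥0∞} (hψ : Tendsto ψ (cocompact X) (𝓝 ⊤))
    (hψ' : Tendsto ψ' (cocompact Y) (𝓝 ⊤)) :
    Tendsto (fun p : X × Y => ψ p.1 + ψ' p.2) (cocompact (X × Y)) (𝓝 ⊤) := by
  rw [← coprod_cocompact]
  refine Tendsto.sup ?_ ?_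
  · exact tendsto_nhds_top_mono' (hψ.comp tendsto_comap) fun p => le_self_add
  · exact tendsto_nhds_top_mono' (hψ'.comp tendsto_comap) fun p => le_add_self

section LowerSemicontinuous

variable {X : Type*} [TopologicalSpace X] [MeasurableSpace X]

section PseudoMetrizable

variable [PseudoMetrizableSpace X] [SeparableSpace X] [OpensMeasurableSpace X]

theorem lowerSemicontinuous_lintegral_ofReal {f : X → ℝ} (hf : LowerSemicontinuous f)
    (hf₀ : 0 ≤ f) :
    LowerSemicontinuous fun π : ProbabilityMeasure X => ∫⁻ x, ENNReal.ofReal (f x) ∂π := by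
  refine lowerSemicontinuous_iff_le_liminf.2 fun π => ?_
  simp_rw [lintegral_eq_lintegral_meas_lt _ (Eventually.of_forall hf₀) hf.measurable.aemeasurable]
  let m : ProbabilityMeasure X → ℝ → ℝ≥0∞ := fun ρ t => (ρ : Measure X) {x | t < f x}
  calc ∫⁻ t in Ioi 0, m π t
      ≤ ∫⁻ t in Ioi 0, liminf (fun ρ => m ρ t) (𝓝 π) :=
        lintegral_mono fun t => ProbabilityMeasure.le_liminf_measure_open_of_tendsto tendsto_id
          (hf.isOpen_preimage t)
    _ ≤ liminf (fun ρ => ∫⁻ t in Ioi 0, m ρ t) (𝓝 π) :=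
        lintegral_liminf_le fun ρ => Antitone.measurable fun s t hst =>
          measure_mono fun x (hx : t < f x) => hst.trans_lt hx

theorem lowerSemicontinuous_lintegral {f : X → ℝ≥0∞} (hf : LowerSemicontinuous f) :
    LowerSemicontinuous fun π : ProbabilityMeasure X => ∫⁻ x, f x ∂π := by
  let F : ℕ → X → ℝ := fun n x => truncateToReal n (f x)
  have hF : ∀ n, LowerSemicontinuous (F n) := fun n =>
    (continuous_truncateToReal (natCast_ne_top n)).comp_lowerSemicontinuous hf
      (monotone_truncateToReal (natCast_ne_top n))
  have hF_ofReal : ∀ n x, ENNReal.ofReal (F n x) = min (n : ℝ≥0∞) (f x) := fun n x =>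
    ENNReal.ofReal_toReal (min_lt_of_left_lt (natCast_lt_top n)).ne
  have hF_mono : Monotone fun n x => ENNReal.ofReal (F n x) := fun m n hmn x => by
    simp only [hF_ofReal]
    gcongr
  have hF_iSup : ∀ x, ⨆ n, ENNReal.ofReal (F n x) = f x := fun x => by
    simp only [hF_ofReal, ← iSup_inf_eq, ENNReal.iSup_natCast, top_inf_eq]
  have h_lintegral : ∀ π : ProbabilityMeasure X,
      ∫⁻ x, f x ∂π = ⨆ n, ∫⁻ x, ENNReal.ofReal (F n x) ∂π := fun π => by
    rw [← lintegral_iSup (fun n => (hF n).measurable.ennreal_ofReal) hF_mono]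
    simp only [hF_iSup]
  simp only [h_lintegral]
  exact lowerSemicontinuous_iSup fun n =>
    lowerSemicontinuous_lintegral_ofReal (hF n) fun _ => truncateToReal_nonneg

end PseudoMetrizable

theorem isCompact_setOf_lintegral_le [MetrizableSpace X] [SeparableSpace X] [BorelSpace X]
    {ψ : X → ℝ≥0∞} (hψ : LowerSemicontinuous ψ) (hψ_top : Tendsto ψ (cocompact X) (𝓝 ⊤))
    {r : ℝ≥0∞} (hr : r ≠ ⊤) :
    IsCompact {π : ProbabilityMeasure X | ∫⁻ x, ψ x ∂π ≤ r} := by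
  have hclosed : IsClosed {π : ProbabilityMeasure X | ∫⁻ x, ψ x ∂π ≤ r} :=
    (lowerSemicontinuous_lintegral hψ).isClosed_preimage r
  rw [← hclosed.closure_eq]
  refine isCompact_closure_of_isTightMeasureSet
    (isTightMeasureSet_iff_exists_isCompact_measure_compl_le.2 fun ε hε => ?_)
  rcases eq_or_ne ε ⊤ with rfl | hε_top
  · exact ⟨∅, isCompact_empty, fun _ _ => le_top⟩
  have hlevel : r / ε + 1 < ⊤ := by finiteness
  obtain ⟨K, hK, hKψ⟩ := mem_cocompact.1 (hψ_top.eventually (lt_mem_nhds hlevel))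
  refine ⟨K, hK, ?_⟩
  rintro _ ⟨π, hπ, rfl⟩
  calc (π : Measure X) Kᶜ ≤ (π : Measure X) {x | r / ε + 1 ≤ ψ x} :=
        measure_mono fun x hx => le_of_lt (show r / ε + 1 < ψ x from hKψ hx)
    _ ≤ (∫⁻ x, ψ x ∂π) / (r / ε + 1) :=
        meas_ge_le_lintegral_div hψ.measurable.aemeasurable (by simp) hlevel.ne
    _ ≤ ε := by
        refine ENNReal.div_le_of_le_mul (hπ.trans ?_)
        rw [mul_add, ENNReal.mul_div_cancel hε.ne' hε_top]
        exact le_self_add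

theorem exists_lowerSemicontinuous_tendsto_cocompact_lintegral_ne_top [T2Space X]
    [OpensMeasurableSpace X] {α : Measure X} (hα : IsTightMeasureSet {α}) :
    ∃ ψ : X → ℝ≥0∞, LowerSemicontinuous ψ ∧ Tendsto ψ (cocompact X) (𝓝 ⊤) ∧
      ∫⁻ x, ψ x ∂α ≠ ⊤ := by
  obtain ⟨δ, hδ_pos, hδ_sum⟩ := ENNReal.exists_pos_sum_of_countable' one_ne_zero ℕ
  choose K hK hKδ using fun n =>
    isTightMeasureSet_iff_exists_isCompact_measure_compl_le.1 hα (δ n) (hδ_pos n)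
  have hK_open : ∀ n, IsOpen (K n)ᶜ := fun n => (hK n).isClosed.isOpen_compl
  refine ⟨fun x => ∑' n, (K n)ᶜ.indicator 1 x, ?_, ?_, ?_⟩
  · exact lowerSemicontinuous_tsum fun n => (hK_open n).lowerSemicontinuous_indicator zero_le_one
  · refine ENNReal.tendsto_nhds_top fun N => ?_
    refine mem_cocompact.2 ⟨⋃ n ∈ Finset.range (N + 1), K n,
      (Finset.range (N + 1)).isCompact_biUnion fun n _ => hK n, fun x hx => ?_⟩
    have hxK : ∀ n ∈ Finset.range (N + 1), (K n)ᶜ.indicator (1 : X → ℝ≥0∞) x = 1 := fun n hn =>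
      indicator_of_mem (show x ∈ (K n)ᶜ from fun hxn => hx (mem_biUnion hn hxn)) _
    calc (N : ℝ≥0∞) < (N + 1 : ℕ) := by exact_mod_cast N.lt_succ_self
      _ = ∑ n ∈ Finset.range (N + 1), (K n)ᶜ.indicator 1 x := by
          rw [Finset.sum_congr rfl hxK]; simp
      _ ≤ ∑' n, (K n)ᶜ.indicator 1 x := ENNReal.sum_le_tsum _
  · refine ne_top_of_lt (b := 1) (lt_of_le_of_lt ?_ hδ_sum)
    rw [lintegral_tsum fun n => (measurable_one.indicator (hK_open n).measurableSet).aemeasurable]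
    refine ENNReal.tsum_le_tsum fun n => ?_
    rw [lintegral_indicator_one (hK_open n).measurableSet]
    exact hKδ n α rfl

theorem measure_eq_of_forall_isOpen_le {μ ν : Measure X}
    [IsProbabilityMeasure μ] [IsProbabilityMeasure ν] [ν.OuterRegular]
    (h : ∀ U, IsOpen U → μ U ≤ ν U) : μ = ν := by
  refine Measure.eq_of_le_of_isProbabilityMeasure (Measure.le_intro fun s _ _ => ?_)
  rw [s.measure_eq_iInf_isOpen ν]
  exact le_iInf₂ fun U hsU => le_iInf fun hU => (measure_mono hsU).trans (h U hU)

end LowerSemicontinuous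

section Transport

variable {Ω X Y : Type*} [MeasurableSpace Ω] [MeasurableSpace X] [MeasurableSpace Y]

/-- `π` is a coupling of `μ` and `ν`: its marginals are `μ` and `ν`. That `π` is a probability
measure is not part of the definition. -/
structure IsCoupling_s3 (π : Measure (X × Y)) (μ : Measure X) (ν : Measure Y) : Prop where
  map_fst : π.map Prod.fst = μ
  map_snd : π.map Prod.snd = ν

namespace IsCoupling_s3

variable {π : Measure (X × Y)} {μ : Measure X} {ν : Measure Y}

theorem prod (μ : Measure X) (ν : Measure Y) [IsProbabilityMeasure μ] [IsProbabilityMeasure ν] :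
    IsCoupling_s3 (μ.prod ν) μ ν :=
  ⟨Measure.fst_prod, Measure.snd_prod⟩

theorem isProbabilityMeasure_left [IsProbabilityMeasure π] (hπ : IsCoupling_s3 π μ ν) :
    IsProbabilityMeasure μ :=
  hπ.map_fst ▸ Measure.isProbabilityMeasure_map measurable_fst.aemeasurable

theorem isProbabilityMeasure_right [IsProbabilityMeasure π] (hπ : IsCoupling_s3 π μ ν) :
    IsProbabilityMeasure ν :=
  hπ.map_snd ▸ Measure.isProbabilityMeasure_map measurable_snd.aemeasurable

theorem lintegral_fst_add_snd (hπ : IsCoupling_s3 π μ ν) {f : X → ℝ≥0∞} {f' : Y → ℝ≥0∞}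
    (hf : Measurable f) (hf' : Measurable f') :
    ∫⁻ p, (f p.1 + f' p.2) ∂π = ∫⁻ x, f x ∂μ + ∫⁻ y, f' y ∂ν := by
  rw [lintegral_add_left (f := fun p : X × Y => f p.1) (hf.comp measurable_fst),
    ← hπ.map_fst, ← hπ.map_snd, lintegral_map hf measurable_fst, lintegral_map hf' measurable_snd]

theorem of_forall_lintegral_le [TopologicalSpace X] [TopologicalSpace Y] [OpensMeasurableSpace X]
    [OpensMeasurableSpace Y] [IsProbabilityMeasure π] [IsProbabilityMeasure μ]
    [IsProbabilityMeasure ν] [μ.OuterRegular] [ν.OuterRegular]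
    (h : ∀ (f : X → ℝ≥0∞) (f' : Y → ℝ≥0∞), LowerSemicontinuous f → LowerSemicontinuous f' →
      ∫⁻ p, (f p.1 + f' p.2) ∂π ≤ ∫⁻ x, f x ∂μ + ∫⁻ y, f' y ∂ν) :
    IsCoupling_s3 π μ ν := by
  have := Measure.isProbabilityMeasure_map (μ := π) measurable_fst.aemeasurable
  have := Measure.isProbabilityMeasure_map (μ := π) measurable_snd.aemeasurable
  constructor
  · refine measure_eq_of_forall_isOpen_le fun U hU => ?_
    have hU_le := h (U.indicator 1) 0 (hU.lowerSemicontinuous_indicator zero_le_one)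
      lowerSemicontinuous_const
    simp only [Pi.zero_apply, add_zero, lintegral_zero] at hU_le
    rwa [← lintegral_indicator_one hU.measurableSet, ← lintegral_indicator_one hU.measurableSet,
      lintegral_map (measurable_one.indicator hU.measurableSet) measurable_fst]
  · refine measure_eq_of_forall_isOpen_le fun U hU => ?_
    have hU_le := h 0 (U.indicator 1) lowerSemicontinuous_const
      (hU.lowerSemicontinuous_indicator zero_le_one)
    simp only [Pi.zero_apply, zero_add, lintegral_zero] at hU_le
    rwa [← lintegral_indicator_one hU.measurableSet, ← lintegral_indicator_one hU.measurableSet,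
      lintegral_map (measurable_one.indicator hU.measurableSet) measurable_snd]

end IsCoupling_s3

theorem lintegral_bind_add_lintegral_bind {P : Measure Ω} {μ : Ω → Measure X} {ν : Ω → Measure Y}
    (hμ : AEMeasurable μ P) (hν : AEMeasurable ν P) {f : X → ℝ≥0∞} {f' : Y → ℝ≥0∞}
    (hf : Measurable f) (hf' : Measurable f') :
    ∫⁻ x, f x ∂(P.bind μ) + ∫⁻ y, f' y ∂(P.bind ν) =
      ∫⁻ ω, (∫⁻ x, f x ∂(μ ω) + ∫⁻ y, f' y ∂(ν ω)) ∂P := by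
  rw [Measure.lintegral_bind hμ hf.aemeasurable, Measure.lintegral_bind hν hf'.aemeasurable]
  exact (lintegral_add_left' ((Measure.measurable_lintegral hf).comp_aemeasurable hμ) _).symm

theorem exists_isCoupling_bind_lintegral_le_s3 [TopologicalSpace X] [PolishSpace X] [BorelSpace X]
    [TopologicalSpace Y] [PolishSpace Y] [BorelSpace Y] {P : Measure Ω} [IsProbabilityMeasure P]
    {μ : Ω → Measure X} {ν : Ω → Measure Y} (hμ : AEMeasurable μ P) (hν : AEMeasurable ν P)
    {c : X × Y → ℝ≥0∞} (hc : LowerSemicontinuous c) {k : Ω → ℝ≥0∞} (hk : AEMeasurable k P)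
    (hπ : ∀ᵐ ω ∂P, ∃ π : ProbabilityMeasure (X × Y),
      IsCoupling_s3 (π : Measure (X × Y)) (μ ω) (ν ω) ∧ ∫⁻ p, c p ∂π ≤ k ω) :
    ∃ π : ProbabilityMeasure (X × Y),
      IsCoupling_s3 (π : Measure (X × Y)) (P.bind μ) (P.bind ν) ∧
        ∫⁻ p, c p ∂π ≤ ∫⁻ ω, k ω ∂P := by
  have := isProbabilityMeasure_bind hμ (hπ.mono fun ω ⟨π, h, _⟩ => h.isProbabilityMeasure_left)
  have := isProbabilityMeasure_bind hν (hπ.mono fun ω ⟨π, h, _⟩ => h.isProbabilityMeasure_right)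
  obtain ⟨ψ, hψ, hψ_top, hψ_int⟩ := exists_lowerSemicontinuous_tendsto_cocompact_lintegral_ne_top
    (isTightMeasureSet_singleton (μ := P.bind μ))
  obtain ⟨ψ', hψ', hψ'_top, hψ'_int⟩ :=
    exists_lowerSemicontinuous_tendsto_cocompact_lintegral_ne_top
      (isTightMeasureSet_singleton (μ := P.bind ν))
  -- `none` bounds the transport cost, `some (f, f')` tests the two marginals against `f` and `f'`.
  let I := {f : X → ℝ≥0∞ // LowerSemicontinuous f} × {f : Y → ℝ≥0∞ // LowerSemicontinuous f}
  let g : Option I → X × Y → ℝ≥0∞ := fun i p => i.elim (c p) fun f => f.1.1 p.1 + f.2.1 p.2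
  let h : Option I → Ω → ℝ≥0∞ := fun i ω =>
    i.elim (k ω) fun f => ∫⁻ x, f.1.1 x ∂(μ ω) + ∫⁻ y, f.2.1 y ∂(ν ω)
  have hg : ∀ i, LowerSemicontinuous (g i)
    | none => hc
    | some f => (f.1.2.comp continuous_fst).add (f.2.2.comp continuous_snd)
  have hh_meas : ∀ i, AEMeasurable (h i) P
    | none => hk
    | some f => ((Measure.measurable_lintegral f.1.2.measurable).comp_aemeasurable hμ).add
        ((Measure.measurable_lintegral f.2.2.measurable).comp_aemeasurable hν)
  obtain ⟨π, hπ_le⟩ := exists_forall_lintegral_le_lintegral P (g := g) (h := h)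
    (fun i => lowerSemicontinuous_lintegral (hg i)) hh_meas
    (hπ.mono fun ω ⟨π, hω, hπc⟩ => ⟨π, fun
      | none => hπc
      | some f => (hω.lintegral_fst_add_snd f.1.2.measurable f.2.2.measurable).le⟩)
    (i₀ := some (⟨ψ, hψ⟩, ⟨ψ', hψ'⟩))
    ((lintegral_bind_add_lintegral_bind hμ hν hψ.measurable hψ'.measurable).symm.trans_ne
      (ENNReal.add_ne_top.2 ⟨hψ_int, hψ'_int⟩))
    (fun r hr => isCompact_setOf_lintegral_le (hg (some (⟨ψ, hψ⟩, ⟨ψ', hψ'⟩)))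
      (tendsto_fst_add_snd_cocompact hψ_top hψ'_top) hr)
  refine ⟨π, .of_forall_lintegral_le fun f f' hf hf' => ?_, hπ_le none⟩
  exact (hπ_le (some (⟨f, hf⟩, ⟨f', hf'⟩))).trans_eq
    (lintegral_bind_add_lintegral_bind hμ hν hf.measurable hf'.measurable).symm

/-- The optimal transport cost between `μ` and `ν` for the cost function `c`, as the infimum over
couplings of the integral of `c`. -/
def transportCost (c : X × Y → ℝ≥0∞) (μ : Measure X) (ν : Measure Y) : ℝ≥0∞ :=
  ⨅ (π : ProbabilityMeasure (X × Y)) (_ : IsCoupling_s3 (π : Measure (X × Y)) μ ν), ∫⁻ p, c p ∂π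

theorem exists_isCoupling_lintegral_le_transportCost_add (c : X × Y → ℝ≥0∞) (μ : Measure X)
    (ν : Measure Y) [IsProbabilityMeasure μ] [IsProbabilityMeasure ν] {ε : ℝ≥0} (hε : 0 < ε) :
    ∃ π : ProbabilityMeasure (X × Y), IsCoupling_s3 (π : Measure (X × Y)) μ ν ∧
      ∫⁻ p, c p ∂π ≤ transportCost c μ ν + ε := by
  rcases eq_or_ne (transportCost c μ ν) ⊤ with h | h
  · exact ⟨⟨μ.prod ν, inferInstance⟩, .prod μ ν, by simp [h]⟩
  · have hlt := ENNReal.lt_add_right h (ENNReal.coe_ne_zero.2 hε.ne')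
    nth_rewrite 1 [transportCost] at hlt
    simp only [iInf_lt_iff] at hlt
    obtain ⟨π, hπ, hπc⟩ := hlt
    exact ⟨π, hπ, hπc.le⟩

theorem transportCost_bind_le_lintegral [TopologicalSpace X] [PolishSpace X] [BorelSpace X]
    [TopologicalSpace Y] [PolishSpace Y] [BorelSpace Y] {P : Measure Ω} [IsProbabilityMeasure P]
    {μ : Ω → Measure X} {ν : Ω → Measure Y} (hμ : AEMeasurable μ P) (hν : AEMeasurable ν P)
    (hμ_prob : ∀ᵐ ω ∂P, IsProbabilityMeasure (μ ω))
    (hν_prob : ∀ᵐ ω ∂P, IsProbabilityMeasure (ν ω))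
    {c : X × Y → ℝ≥0∞} (hc : LowerSemicontinuous c) {k : Ω → ℝ≥0∞} (hk : AEMeasurable k P)
    (hck : ∀ᵐ ω ∂P, transportCost c (μ ω) (ν ω) ≤ k ω) :
    transportCost c (P.bind μ) (P.bind ν) ≤ ∫⁻ ω, k ω ∂P := by
  refine ENNReal.le_of_forall_pos_le_add fun ε hε _ => ?_
  have hcoupling : ∀ᵐ ω ∂P, ∃ π : ProbabilityMeasure (X × Y),
      IsCoupling_s3 (π : Measure (X × Y)) (μ ω) (ν ω) ∧ ∫⁻ p, c p ∂π ≤ k ω + ε := by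
    filter_upwards [hμ_prob, hν_prob, hck] with ω _ _ hω
    obtain ⟨π, hπ, hπc⟩ := exists_isCoupling_lintegral_le_transportCost_add c (μ ω) (ν ω) hε
    exact ⟨π, hπ, hπc.trans (by gcongr)⟩
  obtain ⟨π, hπ, hπc⟩ :=
    exists_isCoupling_bind_lintegral_le_s3 hμ hν hc (hk.add_const _) hcoupling
  calc transportCost c (P.bind μ) (P.bind ν) ≤ ∫⁻ p, c p ∂π := iInf₂_le π hπ
    _ ≤ ∫⁻ ω, (k ω + ε) ∂P := hπc
    _ = ∫⁻ ω, k ω ∂P + ε := by simp [lintegral_add_right]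

end Transport

section Wasserstein

variable {E : Type*} [NormedAddCommGroup E] [MeasurableSpace E]

theorem W2sq_eq_transportCost (μ ν : Measure E) :
    W2sq μ ν = transportCost (fun p : E × E => (‖p.1 - p.2‖₊ : ℝ≥0∞) ^ 2) μ ν :=
  le_antisymm
    (le_iInf₂ fun π hπ =>
      iInf₂_le_of_le (π : Measure (E × E)) π.2 (iInf₂_le hπ.map_fst hπ.map_snd))
    (le_iInf₂ fun π hπ => le_iInf₂ fun h₁ h₂ =>
      iInf₂_le (⟨π, hπ⟩ : ProbabilityMeasure (E × E)) ⟨h₁, h₂⟩)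

theorem W2_le_iff {μ ν : Measure E} {S : ℝ≥0∞} : W2 μ ν ≤ S ↔ W2sq μ ν ≤ S ^ 2 := by
  rw [W2, one_div, ENNReal.rpow_inv_le_iff two_pos, ENNReal.rpow_two]

theorem W2_bind_le [CompleteSpace E] [SecondCountableTopology E] [BorelSpace E]
    {Ω : Type*} [MeasurableSpace Ω] {P : Measure Ω} [IsProbabilityMeasure P]
    {μ ν : Ω → Measure E} (hμ : AEMeasurable μ P) (hν : AEMeasurable ν P)
    (hμ_prob : ∀ᵐ ω ∂P, IsProbabilityMeasure (μ ω))
    (hν_prob : ∀ᵐ ω ∂P, IsProbabilityMeasure (ν ω)) {S : ℝ≥0∞}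
    (hS : ∀ᵐ ω ∂P, W2 (μ ω) (ν ω) ≤ S) : W2 (P.bind μ) (P.bind ν) ≤ S := by
  simp only [W2_le_iff, W2sq_eq_transportCost] at hS ⊢
  have hcost : Continuous fun p : E × E => (‖p.1 - p.2‖₊ : ℝ≥0∞) ^ 2 := by fun_prop
  simpa using transportCost_bind_le_lintegral hμ hν hμ_prob hν_prob hcost.lowerSemicontinuous
    aemeasurable_const hS

end Wasserstein

section Graphon

variable {G : ℝ → ℝ → ℝ} {u : ℝ}

/-- The probability measure `G̃(u,v) dv` on `[0,1]`, so that `[Gμ]^u` is its mixture of the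
measures `μ^v`. -/
def gnormMeasure (G : ℝ → ℝ → ℝ) (u : ℝ) : Measure ℝ :=
  (volume.restrict (Icc 0 1)).withDensity fun v => ENNReal.ofReal (gnorm G u v)

theorem gnormMeasure_absolutelyContinuous (G : ℝ → ℝ → ℝ) (u : ℝ) :
    gnormMeasure G u ≪ volume.restrict (Icc 0 1) :=
  withDensity_absolutelyContinuous _ _

theorem isProbabilityMeasure_gnormMeasure (hG_nonneg : ∀ v, 0 ≤ G u v)
    (hG_int : IntegrableOn (G u) (Icc 0 1)) (hG_pos : 0 < ∫ v in Icc (0 : ℝ) 1, G u v) :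
    IsProbabilityMeasure (gnormMeasure G u) := by
  constructor
  simp only [gnormMeasure, gnorm, withDensity_apply _ .univ, Measure.restrict_univ]
  rw [← ofReal_integral_eq_lintegral_ofReal (hG_int.div_const _)
    (.of_forall fun v => div_nonneg (hG_nonneg v) hG_pos.le),
    integral_div, div_self hG_pos.ne', ENNReal.ofReal_one]

theorem IsGraphonAggregate.eq_bind_s3 {E : Type*} [MeasurableSpace E] {μ α : ℝ → Measure E}
    (hα : IsGraphonAggregate G μ α) (hu : u ∈ Icc (0 : ℝ) 1)
    (hG_int : IntegrableOn (G u) (Icc 0 1)) (hμ : AEMeasurable μ (volume.restrict (Icc 0 1))) :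
    α u = (gnormMeasure G u).bind μ := by
  have hG_meas : AEMeasurable (fun v => ENNReal.ofReal (gnorm G u v))
      (volume.restrict (Icc 0 1)) := (hG_int.div_const _).aemeasurable.ennreal_ofReal
  ext B hB
  rw [(hα u hu).2 B hB,
    Measure.bind_apply hB (hμ.mono_ac (gnormMeasure_absolutelyContinuous G u)), gnormMeasure,
    lintegral_withDensity_eq_lintegral_mul₀ hG_meas
      (show AEMeasurable (fun v => μ v B) _ from
        (Measure.measurable_coe hB).comp_aemeasurable hμ)]
  rfl

end Graphon

theorem graphon_aggregate_W2_sup_stability_general {E : Type*} [NormedAddCommGroup E]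
    [CompleteSpace E] [SecondCountableTopology E] [MeasurableSpace E] [BorelSpace E]
    (G : ℝ → ℝ → ℝ) (hG_nonneg : ∀ u v, 0 ≤ G u v)
    (hG_deg : ∀ u ∈ Icc (0 : ℝ) 1,
      IntegrableOn (G u) (Icc 0 1) ∧ 0 < ∫ v in Icc (0 : ℝ) 1, G u v)
    (μ ν : ℝ → Measure E) (hμ_prob : ∀ u ∈ Icc (0 : ℝ) 1, IsProbabilityMeasure (μ u))
    (hν_prob : ∀ u ∈ Icc (0 : ℝ) 1, IsProbabilityMeasure (ν u))
    (hμ : ∀ B, MeasurableSet B → AEMeasurable (fun u => μ u B) (volume.restrict (Icc 0 1)))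
    (hν : ∀ B, MeasurableSet B → AEMeasurable (fun u => ν u B) (volume.restrict (Icc 0 1)))
    (α β : ℝ → Measure E) (hα : IsGraphonAggregate G μ α) (hβ : IsGraphonAggregate G ν β) :
    ⨆ u ∈ Icc (0 : ℝ) 1, W2 (α u) (β u) ≤ ⨆ u ∈ Icc (0 : ℝ) 1, W2 (μ u) (ν u) := by
  refine iSup₂_le fun u hu => ?_
  obtain ⟨hG_int, hG_pos⟩ := hG_deg u hu
  have := isProbabilityMeasure_gnormMeasure (hG_nonneg u) hG_int hG_pos
  have hac := gnormMeasure_absolutelyContinuous G u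
  have hIcc : ∀ᵐ v ∂volume.restrict (Icc (0 : ℝ) 1), v ∈ Icc (0 : ℝ) 1 :=
    ae_restrict_mem measurableSet_Icc
  have hμ_meas : AEMeasurable μ (volume.restrict (Icc 0 1)) :=
    aemeasurable_measure_of_forall_aemeasurable
      (hIcc.mono fun v hv => have := hμ_prob v hv; inferInstance) hμ
  have hν_meas : AEMeasurable ν (volume.restrict (Icc 0 1)) :=
    aemeasurable_measure_of_forall_aemeasurable
      (hIcc.mono fun v hv => have := hν_prob v hv; inferInstance) hν
  rw [hα.eq_bind_s3 hu hG_int hμ_meas, hβ.eq_bind_s3 hu hG_int hν_meas]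
  have hIcc' : ∀ᵐ v ∂gnormMeasure G u, v ∈ Icc (0 : ℝ) 1 := hac.ae_le hIcc
  exact W2_bind_le (hμ_meas.mono_ac hac) (hν_meas.mono_ac hac) (hIcc'.mono hμ_prob)
    (hIcc'.mono hν_prob)
    (hIcc'.mono fun v hv => le_iSup₂ (f := fun v _ => W2 (μ v) (ν v)) v hv)

end AggregateStability

/-- **Sup stability of graphon aggregation in Wasserstein distance** (no uniform bounds on `G`):
`sup_u W₂([Gμ]^u, [Gν]^u) ≤ sup_u W₂(μ^u, ν^u)`. -/
theorem graphon_aggregate_W2_sup_stability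
    (d : ℕ) (G : ℝ → ℝ → ℝ)
    (hGmeas : Measurable (Function.uncurry G))
    (hGsymm : ∀ u v, G u v = G v u)
    (hGnonneg : ∀ u v, 0 ≤ G u v)
    (hGdeg : ∀ u ∈ Set.Icc (0:ℝ) 1,
      IntegrableOn (fun v => G u v) (Set.Icc (0:ℝ) 1) ∧
        0 < ∫ v in Set.Icc (0:ℝ) 1, G u v)
    (μ ν : ℝ → Measure (EuclideanSpace ℝ (Fin d)))
    (hμprob : ∀ u ∈ Set.Icc (0:ℝ) 1, IsProbabilityMeasure (μ u))
    (hνprob : ∀ u ∈ Set.Icc (0:ℝ) 1, IsProbabilityMeasure (ν u))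
    (hμsetwise : ∀ B : Set (EuclideanSpace ℝ (Fin d)), MeasurableSet B →
      AEMeasurable (fun u => μ u B) (volume.restrict (Set.Icc (0:ℝ) 1)))
    (hνsetwise : ∀ B : Set (EuclideanSpace ℝ (Fin d)), MeasurableSet B →
      AEMeasurable (fun u => ν u B) (volume.restrict (Set.Icc (0:ℝ) 1)))
    (hμmom : (⨆ u ∈ Set.Icc (0:ℝ) 1, ∫⁻ x, (‖x‖₊ : ℝ≥0∞) ^ 2 ∂(μ u)) < ⊤)
    (hνmom : (⨆ u ∈ Set.Icc (0:ℝ) 1, ∫⁻ x, (‖x‖₊ : ℝ≥0∞) ^ 2 ∂(ν u)) < ⊤)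
    (aggμ aggν : ℝ → Measure (EuclideanSpace ℝ (Fin d)))
    (haggμ : IsGraphonAggregate G μ aggμ)
    (haggν : IsGraphonAggregate G ν aggν) :
    (⨆ u ∈ Set.Icc (0:ℝ) 1, W2 (aggμ u) (aggν u)) ≤
      ⨆ u ∈ Set.Icc (0:ℝ) 1, W2 (μ u) (ν u) :=
  graphon_aggregate_W2_sup_stability_general G hGnonneg hGdeg μ ν hμprob hνprob hμsetwise hνsetwise
    aggμ aggν haggμ haggν

end
end

section
/- Let w : [0,1] → [0,∞) be Lebesgue-measurable with ∫₀¹ w(v) dv = 1, and let (μ^v)_{v∈[0,1]} and (ν^v)_{v∈[0,1]} be setwise measurable families of Borel probability measures on ℝ^d with sup_{v∈[0,1]} ∫ |x|² dμ^v(x) < ∞ and sup_{v∈[0,1]} ∫ |x|² dν^v(x) < ∞. Let μ̄ and ν̄ be the mixture probability measures determined by μ̄(B) = ∫₀¹ w(v) μ^v(B) dv and ν̄(B) = ∫₀¹ w(v) ν^v(B) dv for Borel sets B. Then W₂²(μ̄, ν̄) ≤ ∫₀¹ w(v) W₂²(μ^v, ν^v) dv, where the right-hand side is an upper Lebesgue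 integral. -/
open MeasureTheory ENNReal

noncomputable section

/-!
Near-optimal couplings of `μ v` and `ν v` need not depend measurably on `v`, so they cannot be mixed
by the Lebesgue integral. They are mixed instead by a finitely additive extension of it to all
functions, an ultrafilter limit of integrals over finer and finer samples. On a countable space
nothing is lost: the marginals of the mixed plan are mixed by the Lebesgue integral, hence countably
additive, and they dominate the plan, so no mass escapes. The general case is reduced to the
countable one by quantizing the space at scale `δ`; the plan `ρ` obtained between the quantized
mixtures is lifted to a coupling of the mixtures themselves by giving their product measure the
density of `ρ` with respect to the product of its marginals, composed with the quantization.
-/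

open Filter Topology TopologicalSpace
open scoped NNReal

section Quantization

theorem exists_measurable_nndist_le {X : Type*} [PseudoMetricSpace X] [SeparableSpace X]
    [Nonempty X] [MeasurableSpace X] [OpensMeasurableSpace X] {δ : ℝ≥0} (hδ : 0 < δ) :
    ∃ (Q : X → ℕ) (r : ℕ → X), Measurable Q ∧ ∀ x, nndist x (r (Q x)) ≤ δ := by
  classical
  have h_near : ∀ x : X, ∃ n, nndist x (denseSeq X n) < δ := fun x ↦
    (denseRange_denseSeq X).exists_dist_lt x (NNReal.coe_pos.2 hδ)
  refine ⟨fun x ↦ Nat.find (h_near x), denseSeq X, measurable_find h_near fun n ↦ ?_,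
    fun x ↦ (Nat.find_spec (h_near x)).le⟩
  exact (isOpen_lt (by fun_prop) continuous_const).measurableSet

end Quantization

section IntegralExtension

variable {Ω : Type*} [MeasurableSpace Ω] {P : Measure Ω}

/-- `Λ` is a finitely additive integral, defined on all nonnegative functions, that agrees with the
Lebesgue integral on the integrable ones. It integrates families that are not chosen measurably. -/
def IsIntegralExtension (P : Measure Ω) (Λ : (Ω → ℝ≥0∞) →ₗ[ℝ≥0] ℝ≥0∞) : Prop :=
  ∀ f : Ω → ℝ≥0∞, AEMeasurable f P → ∫⁻ v, f v ∂P ≠ ∞ → Λ f = ∫⁻ v, f v ∂P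

/-- The integral over the sample points `s n`, weighted by `ρ {n}`. -/
def sampledLintegral (ρ : Measure ℕ) (s : ℕ → Ω) : (Ω → ℝ≥0∞) →ₗ[ℝ≥0] ℝ≥0∞ where
  toFun h := ∫⁻ n, h (s n) ∂ρ
  map_add' _ _ := lintegral_add_left (measurable_of_countable _) _
  map_smul' _ _ := lintegral_const_mul _ (measurable_of_countable _)

theorem le_add_of_nndist_toNNReal_le {a b : ℝ≥0∞} {ε : ℝ≥0} (ha : a ≠ ∞) (hb : b ≠ ∞)
    (h : nndist a.toNNReal b.toNNReal ≤ ε) : a ≤ b + ε := by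
  lift a to ℝ≥0 using ha
  lift b to ℝ≥0 using hb
  exact_mod_cast (NNReal.le_add_nndist a b).trans (by gcongr; exact h)

theorem exists_sampling_ae_nndist_le {X : Type*} [PseudoMetricSpace X] [SeparableSpace X]
    [MeasurableSpace X] [OpensMeasurableSpace X] [NeZero P] {F : Ω → X}
    (hF : AEMeasurable F P) {T : Set Ω} (hT : T ∈ ae P) {ε : ℝ≥0} (hε : 0 < ε) :
    ∃ (R : Ω → ℕ) (s : ℕ → Ω), Measurable R ∧
      ∀ᵐ v ∂P, s (R v) ∈ T ∧ nndist (F v) (F (s (R v))) ≤ ε := by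
  have : Nonempty Ω := P.nonempty_of_neZero
  have : Nonempty X := ‹Nonempty Ω›.map F
  obtain ⟨Q, r, hQ, hr⟩ := exists_measurable_nndist_le (X := X) (half_pos hε)
  set R : Ω → ℕ := Q ∘ hF.mk F
  set S : Set Ω := {v | v ∈ T ∧ F v = hF.mk F v}
  refine ⟨R, Function.invFunOn R S, hQ.comp hF.measurable_mk, ?_⟩
  filter_upwards [hT, hF.ae_eq_mk] with v hvT hvF
  have h_img : R v ∈ R '' S := ⟨v, ⟨hvT, hvF⟩, rfl⟩
  obtain ⟨hxT, hxF⟩ := Function.invFunOn_mem h_img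
  have hRx : R (Function.invFunOn R S (R v)) = R v := Function.invFunOn_eq h_img
  set x := Function.invFunOn R S (R v)
  refine ⟨hxT, ?_⟩
  calc nndist (F v) (F x)
      ≤ nndist (F v) (r (R v)) + nndist (F x) (r (R v)) := nndist_triangle_right _ _ _
    _ ≤ ε / 2 + ε / 2 := by
        gcongr
        · exact hvF ▸ hr (hF.mk F v)
        · exact hRx ▸ hxF ▸ hr (hF.mk F x)
    _ = ε := add_halves ε

theorem lintegral_add_const [IsProbabilityMeasure P] (f : Ω → ℝ≥0∞) (c : ℝ≥0∞) :
    ∫⁻ v, f v + c ∂P = ∫⁻ v, f v ∂P + c := by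
  rw [lintegral_add_right _ measurable_const, lintegral_const, measure_univ, mul_one]

theorem exists_linearMap_near_lintegral [IsProbabilityMeasure P] {ι : Type*} [Finite ι]
    {f : ι → Ω → ℝ≥0∞} (hf : ∀ i, AEMeasurable (f i) P) (hfin : ∀ i, ∀ᵐ v ∂P, f i v ≠ ∞)
    {ε : ℝ≥0} (hε : 0 < ε) :
    ∃ Λ : (Ω → ℝ≥0∞) →ₗ[ℝ≥0] ℝ≥0∞,
      ∀ i, Λ (f i) ≤ ∫⁻ v, f i v ∂P + ε ∧ ∫⁻ v, f i v ∂P ≤ Λ (f i) + ε := by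
  have := Fintype.ofFinite ι
  obtain ⟨R, s, hR, hs⟩ := exists_sampling_ae_nndist_le (F := fun v i ↦ (f i v).toNNReal)
    (aemeasurable_pi_lambda _ fun i ↦ (hf i).ennreal_toNNReal) (ae_all_iff.2 hfin) hε
  have h_eval : ∀ h : Ω → ℝ≥0∞, sampledLintegral (P.map R) s h = ∫⁻ v, h (s (R v)) ∂P :=
    fun h ↦ lintegral_map (measurable_of_countable _) hR
  refine ⟨sampledLintegral (P.map R) s, fun i ↦ ?_⟩
  rw [h_eval, ← lintegral_add_const, ← lintegral_add_const]
  constructor <;> refine lintegral_mono_ae ?_ <;>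
    filter_upwards [hfin i, hs] with v hv ⟨hsv, hdist⟩
  · refine le_add_of_nndist_toNNReal_le (hsv i) hv ?_
    rw [nndist_comm]
    exact (nndist_le_pi_nndist _ _ i).trans hdist
  · exact le_add_of_nndist_toNNReal_le hv (hsv i) ((nndist_le_pi_nndist _ _ i).trans hdist)

theorem exists_isIntegralExtension (P : Measure Ω) [IsProbabilityMeasure P] :
    ∃ Λ, IsIntegralExtension P Λ := by
  classical
  have : ContinuousConstSMul ℝ≥0 ℝ≥0∞ := ⟨fun _ ↦ ENNReal.continuous_const_mul coe_ne_top⟩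
  let ι := {f : Ω → ℝ≥0∞ // AEMeasurable f P ∧ ∫⁻ v, f v ∂P ≠ ∞}
  obtain ⟨ε, -, hε_pos, hε_lim⟩ := exists_seq_strictAnti_tendsto (0 : ℝ≥0)
  have h_near : ∀ a : Finset ι × ℕ, ∃ Λ : (Ω → ℝ≥0∞) →ₗ[ℝ≥0] ℝ≥0∞, ∀ f : a.1,
      Λ f.1.1 ≤ ∫⁻ v, f.1.1 v ∂P + ε a.2 ∧ ∫⁻ v, f.1.1 v ∂P ≤ Λ f.1.1 + ε a.2 := fun a ↦
    exists_linearMap_near_lintegral (fun f : a.1 ↦ f.1.2.1)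
      (fun f ↦ (ae_lt_top' f.1.2.1 f.1.2.2).mono fun _ ↦ LT.lt.ne) (hε_pos a.2)
  choose Λ hΛ using h_near
  have h_tendsto : ∀ f : ι, Tendsto (fun a ↦ Λ a f.1) atTop (𝓝 (∫⁻ v, f.1 v ∂P)) := fun f ↦ by
    have h_mem : ∀ᶠ a : Finset ι × ℕ in atTop, f ∈ a.1 := by
      filter_upwards [eventually_ge_atTop (({f}, 0) : Finset ι × ℕ)] with a ha
      exact ha.1 (Finset.mem_singleton_self f)
    have hε' : Tendsto (fun a : Finset ι × ℕ ↦ (ε a.2 : ℝ≥0∞)) atTop (𝓝 0) := by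
      rw [← prod_atTop_atTop_eq]
      exact (ENNReal.tendsto_coe.2 hε_lim).comp tendsto_snd
    refine tendsto_of_tendsto_of_tendsto_of_le_of_le'
      (by simpa using ENNReal.Tendsto.sub tendsto_const_nhds hε' (.inr zero_ne_top))
      (by simpa using tendsto_const_nhds.add hε') ?_ ?_ <;>
      filter_upwards [h_mem] with a ha
    · exact tsub_le_iff_right.2 (hΛ a ⟨f, ha⟩).2
    · exact (hΛ a ⟨f, ha⟩).1
  let l : Ultrafilter (Finset ι × ℕ) := Ultrafilter.of atTop
  have h_lim := (l.map fun a h ↦ Λ a h).le_nhds_lim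
  refine ⟨linearMapOfTendsto _ Λ h_lim, fun f hf hfin ↦ ?_⟩
  exact tendsto_nhds_unique (tendsto_pi_nhds.1 h_lim f)
    ((h_tendsto ⟨f, hf, hfin⟩).mono_left (Ultrafilter.of_le atTop))

namespace IsIntegralExtension

variable {Λ : (Ω → ℝ≥0∞) →ₗ[ℝ≥0] ℝ≥0∞} (hΛ : IsIntegralExtension P Λ)
include hΛ

theorem le_lintegral {f g : Ω → ℝ≥0∞} (hg : AEMeasurable g P) (hfg : f ≤ᵐ[P] g) :
    Λ f ≤ ∫⁻ v, g v ∂P := by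
  by_cases hfin : ∫⁻ v, g v ∂P = ∞
  · exact hfin ▸ le_top
  have h_sup : g =ᵐ[P] f ⊔ g := hfg.mono fun v hv ↦ (sup_eq_right.2 hv).symm
  have h_int : ∫⁻ v, g v ∂P = ∫⁻ v, (f ⊔ g) v ∂P := lintegral_congr_ae h_sup
  calc Λ f ≤ Λ f + Λ (f ⊔ g - f) := le_self_add
    _ = Λ (f ⊔ g) := by rw [← map_add, add_tsub_cancel_of_le le_sup_left]
    _ = ∫⁻ v, g v ∂P := by rw [hΛ _ (hg.congr h_sup) (h_int ▸ hfin), h_int]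

theorem map_tsum {κ : Type*} [Countable κ] {f b : κ → Ω → ℝ≥0∞}
    (hb : ∀ j, AEMeasurable (b j) P) (hfb : ∀ j, f j ≤ᵐ[P] b j)
    (hfin : ∑' j, ∫⁻ v, b j v ∂P ≠ ∞) : Λ (fun v ↦ ∑' j, f j v) = ∑' j, Λ (f j) := by
  have h_split : ∀ J : Finset κ, Λ (fun v ↦ ∑' j, f j v) =
      ∑ j ∈ J, Λ (f j) + Λ (fun v ↦ ∑' j : {j // j ∉ J}, f j v) := fun J ↦ by
    rw [← _root_.map_sum, ← map_add]
    congr 1 with v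
    simp only [Pi.add_apply, Finset.sum_apply]
    exact (ENNReal.sum_add_tsum_compl J fun j ↦ f j v).symm
  have h_tail : ∀ J : Finset κ, Λ (fun v ↦ ∑' j : {j // j ∉ J}, f j v) ≤
      ∑' j : {j // j ∉ J}, ∫⁻ v, b j v ∂P := fun J ↦ by
    rw [← lintegral_tsum fun j : {j // j ∉ J} ↦ hb j]
    refine hΛ.le_lintegral (AEMeasurable.tsum fun j ↦ hb j) ?_
    filter_upwards [ae_all_iff.2 hfb] with v hv
    exact ENNReal.tsum_le_tsum fun j ↦ hv j
  apply le_antisymm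
  · have h_lim : Tendsto (fun J : Finset κ ↦ ∑' j, Λ (f j) +
        ∑' j : {j // j ∉ J}, ∫⁻ v, b j v ∂P) atTop (𝓝 (∑' j, Λ (f j))) := by
      simpa using tendsto_const_nhds.add (ENNReal.tendsto_tsum_compl_atTop_zero hfin)
    refine ge_of_tendsto' h_lim fun J ↦ ?_
    rw [h_split J]
    exact add_le_add (ENNReal.sum_le_tsum J) (h_tail J)
  · exact ENNReal.summable.tsum_le_of_sum_le fun J ↦ h_split J ▸ le_self_add

end IsIntegralExtension

end IntegralExtension

section Mixture

variable {Ω X Y : Type*} [MeasurableSpace Ω] [MeasurableSpace X] [MeasurableSpace Y]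
  {P : Measure Ω} {μ : Ω → Measure X} {μbar : Measure X}

/-- `μbar` is the mixture `∫ μ v ∂P`, the family `μ` being only setwise measurable: the null set on
which `v ↦ μ v B` differs from a measurable function may depend on `B`. -/
structure IsMixture (P : Measure Ω) (μ : Ω → Measure X) (μbar : Measure X) : Prop where
  aemeasurable : ∀ B, MeasurableSet B → AEMeasurable (fun v ↦ μ v B) P
  apply_eq_lintegral : ∀ B, MeasurableSet B → μbar B = ∫⁻ v, μ v B ∂P

namespace IsMixture

theorem map (h : IsMixture P μ μbar) {f : X → Y} (hf : Measurable f) :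
    IsMixture P (fun v ↦ (μ v).map f) (μbar.map f) where
  aemeasurable B hB := by simpa only [Measure.map_apply hf hB] using h.aemeasurable _ (hf hB)
  apply_eq_lintegral B hB := by
    simpa only [Measure.map_apply hf hB] using h.apply_eq_lintegral _ (hf hB)

theorem congr_ae (h : IsMixture P μ μbar) {μ' : Ω → Measure X} (hμ : μ =ᵐ[P] μ') :
    IsMixture P μ' μbar where
  aemeasurable B hB := (h.aemeasurable B hB).congr (hμ.mono fun _ hv ↦ congr_arg (· B) hv)
  apply_eq_lintegral B hB := by
    rw [h.apply_eq_lintegral B hB]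
    exact lintegral_congr_ae (hμ.mono fun _ hv ↦ congr_arg (· B) hv)

theorem isProbabilityMeasure [IsProbabilityMeasure P] (h : IsMixture P μ μbar)
    (hμ : ∀ᵐ v ∂P, IsProbabilityMeasure (μ v)) : IsProbabilityMeasure μbar where
  measure_univ := by
    rw [h.apply_eq_lintegral _ .univ, lintegral_congr_ae (hμ.mono fun _ _ ↦ measure_univ)]
    simp

theorem withDensity {m : Measure Ω} {w : Ω → ℝ≥0∞} (hw : AEMeasurable w m)
    (hμ : ∀ B, MeasurableSet B → AEMeasurable (fun v ↦ μ v B) m)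
    (hμbar : ∀ B, MeasurableSet B → μbar B = ∫⁻ v, w v * μ v B ∂m) :
    IsMixture (m.withDensity w) μ μbar where
  aemeasurable B hB := (hμ B hB).mono_ac (withDensity_absolutelyContinuous m w)
  apply_eq_lintegral B hB := by
    rw [hμbar B hB, lintegral_withDensity_eq_lintegral_mul₀ hw (hμ B hB)]
    rfl

end IsMixture

end Mixture

section AtomicMixture

variable {Ω X ι κ : Type*} [MeasurableSpace X]

/-- The mixture of a family of measures on a countable space with respect to a finitely additive
integral `Λ`, defined through its atoms: mixing the values on all sets would only give a finitely
additive measure. -/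
def atomicMixture (Λ : (Ω → ℝ≥0∞) →ₗ[ℝ≥0] ℝ≥0∞) (ρ : Ω → Measure X) : Measure X :=
  Measure.sum fun x ↦ Λ (fun v ↦ ρ v {x}) • Measure.dirac x

variable {Λ : (Ω → ℝ≥0∞) →ₗ[ℝ≥0] ℝ≥0∞}

theorem lintegral_atomicMixture [MeasurableSingletonClass X] (ρ : Ω → Measure X) (f : X → ℝ≥0∞) :
    ∫⁻ x, f x ∂atomicMixture Λ ρ = ∑' x, Λ (fun v ↦ ρ v {x}) * f x := by
  simp [atomicMixture, lintegral_sum_measure]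

theorem atomicMixture_singleton [MeasurableSingletonClass X] (ρ : Ω → Measure X) (x : X) :
    atomicMixture Λ ρ {x} = Λ fun v ↦ ρ v {x} := by
  classical
  rw [← lintegral_indicator_one (measurableSet_singleton x), lintegral_atomicMixture,
    tsum_eq_single x fun y hy ↦ by simp [hy]]
  simp

variable [MeasurableSpace ι] [MeasurableSingletonClass ι] [Countable κ] [MeasurableSpace κ]
  [MeasurableSingletonClass κ]

theorem fst_singleton_eq_tsum (ρ : Measure (ι × κ)) (i : ι) :
    ρ.fst {i} = ∑' j, ρ {(i, j)} := by
  rw [Measure.fst_apply (measurableSet_singleton i),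
    ← measure_iUnion (fun j k hjk ↦ by simpa using hjk) fun j ↦ measurableSet_singleton (i, j)]
  congr 1
  ext ⟨i', j⟩
  simp [eq_comm]

variable [Countable ι]

theorem map_swap_atomicMixture (ρ : Ω → Measure (ι × κ)) :
    (atomicMixture Λ ρ).map Prod.swap = atomicMixture Λ fun v ↦ (ρ v).map Prod.swap := by
  refine Measure.ext_of_singleton fun ⟨j, i⟩ ↦ ?_
  have h_pre : (Prod.swap : ι × κ → κ × ι) ⁻¹' {(j, i)} = {(i, j)} := by
    ext ⟨i', j'⟩
    simp [and_comm]
  simp only [Measure.map_apply measurable_swap (measurableSet_singleton _), h_pre,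
    atomicMixture_singleton]

variable [MeasurableSpace Ω] {P : Measure Ω}

theorem lintegral_atomicMixture_le [Countable X] [MeasurableSingletonClass X]
    (hΛ : IsIntegralExtension P Λ) {ρ : Ω → Measure X} {c : X → ℝ≥0} {g : Ω → ℝ≥0∞}
    (hg : AEMeasurable g P) (hρ : ∀ᵐ v ∂P, ∫⁻ x, c x ∂ρ v ≤ g v) :
    ∫⁻ x, c x ∂atomicMixture Λ ρ ≤ ∫⁻ v, g v ∂P := by
  rw [lintegral_atomicMixture]
  refine ENNReal.summable.tsum_le_of_sum_le fun J ↦ ?_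
  have h_sum : ∑ x ∈ J, Λ (fun v ↦ ρ v {x}) * c x = Λ (∑ x ∈ J, c x • fun v ↦ ρ v {x}) := by
    rw [_root_.map_sum]
    refine Finset.sum_congr rfl fun x _ ↦ ?_
    rw [_root_.map_smul, ENNReal.smul_def, smul_eq_mul, mul_comm]
  rw [h_sum]
  refine hΛ.le_lintegral hg (hρ.mono fun v hv ↦ le_trans ?_ hv)
  rw [lintegral_countable']
  simpa [ENNReal.smul_def] using ENNReal.sum_le_tsum J

variable {ρ : Ω → Measure (ι × κ)} {α : Measure ι} {β : Measure κ}

/- Mass could escape only along the second coordinate, where the mixture of the second marginals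
dominates it. -/
theorem fst_atomicMixture (hΛ : IsIntegralExtension P Λ) [IsFiniteMeasure α] [IsFiniteMeasure β]
    (hα : IsMixture P (fun v ↦ (ρ v).fst) α) (hβ : IsMixture P (fun v ↦ (ρ v).snd) β) :
    (atomicMixture Λ ρ).fst = α := by
  refine Measure.ext_of_singleton fun i ↦ ?_
  have h_le : ∀ j v, ρ v {(i, j)} ≤ (ρ v).snd {j} := fun j v ↦ by
    rw [Measure.snd_apply (measurableSet_singleton j)]
    exact measure_mono (by simp)
  have h_fin : ∑' j, ∫⁻ v, (ρ v).snd {j} ∂P ≠ ∞ := by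
    simp_rw [← hβ.apply_eq_lintegral _ (measurableSet_singleton _)]
    rw [← measure_iUnion (fun j k hjk ↦ by simpa using hjk) fun j ↦ measurableSet_singleton j]
    exact measure_ne_top β _
  have h_int := hα.apply_eq_lintegral _ (measurableSet_singleton i)
  calc (atomicMixture Λ ρ).fst {i}
      = ∑' j, Λ (fun v ↦ ρ v {(i, j)}) := by
        simp only [fst_singleton_eq_tsum, atomicMixture_singleton]
    _ = Λ (fun v ↦ (ρ v).fst {i}) := by
        simp only [fst_singleton_eq_tsum]
        exact (hΛ.map_tsum (fun j ↦ hβ.aemeasurable _ (measurableSet_singleton j))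
          (fun j ↦ .of_forall (h_le j)) h_fin).symm
    _ = α {i} := by
        rw [hΛ _ (hα.aemeasurable _ (measurableSet_singleton i)) (h_int ▸ measure_ne_top α _),
          h_int]

theorem snd_atomicMixture (hΛ : IsIntegralExtension P Λ) [IsFiniteMeasure α] [IsFiniteMeasure β]
    (hα : IsMixture P (fun v ↦ (ρ v).fst) α) (hβ : IsMixture P (fun v ↦ (ρ v).snd) β) :
    (atomicMixture Λ ρ).snd = β := by
  rw [← Measure.fst_map_swap, map_swap_atomicMixture]
  exact fst_atomicMixture hΛ (by simpa using hβ) (by simpa using hα)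

end AtomicMixture

section Lift

variable {X Y X' Y' : Type*} [MeasurableSpace X] [MeasurableSpace Y] [MeasurableSpace X']
  [MeasurableSpace Y']

theorem map_withDensity_comp {μ : Measure X} {f : X → X'} (hf : Measurable f) {h : X' → ℝ≥0∞}
    (hh : Measurable h) : (μ.withDensity (h ∘ f)).map f = (μ.map f).withDensity h := by
  ext s hs
  rw [Measure.map_apply hf hs, withDensity_apply _ (hf hs), withDensity_apply _ hs,
    setLIntegral_map hs hh hf]
  rfl

theorem fst_map_prodMap (τ : Measure (X × Y)) {f : X → X'} {g : Y → Y'} (hf : Measurable f)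
    (hg : Measurable g) : (τ.map (Prod.map f g)).fst = τ.fst.map f := by
  rw [Measure.fst, Measure.fst, Measure.map_map measurable_fst (hf.prodMap hg),
    Measure.map_map hf measurable_fst, Prod.map_fst']

theorem snd_map_prodMap (τ : Measure (X × Y)) {f : X → X'} {g : Y → Y'} (hf : Measurable f)
    (hg : Measurable g) : (τ.map (Prod.map f g)).snd = τ.snd.map g := by
  rw [Measure.snd, Measure.snd, Measure.map_map measurable_snd (hf.prodMap hg),
    Measure.map_map hg measurable_snd, Prod.map_snd']

theorem fst_prod_withDensity (μ : Measure X) (ν : Measure Y) [SFinite μ] [SFinite ν]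
    {h : X × Y → ℝ≥0∞} (hh : Measurable h) :
    ((μ.prod ν).withDensity h).fst = μ.withDensity fun x ↦ ∫⁻ y, h (x, y) ∂ν := by
  ext s hs
  rw [Measure.fst_apply hs, withDensity_apply _ (measurable_fst hs), withDensity_apply _ hs,
    ← Set.prod_univ, setLIntegral_prod _ hh.aemeasurable]
  simp

theorem fst_withDensity_comp_prodMap {μ : Measure X} {ν : Measure Y} [IsFiniteMeasure μ]
    [SFinite ν] {f : X → X'} {g : Y → Y'} (hf : Measurable f) (hg : Measurable g)
    {h : X' × Y' → ℝ≥0∞} (hh : Measurable h)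
    (h_fst : (((μ.map f).prod (ν.map g)).withDensity h).fst = μ.map f) :
    ((μ.prod ν).withDensity (h ∘ Prod.map f g)).fst = μ := by
  set k : X' → ℝ≥0∞ := fun x ↦ ∫⁻ y, h (x, y) ∂ν.map g
  have hk : Measurable k := hh.lintegral_prod_right'
  have hk_one : k =ᵐ[μ.map f] 1 := by
    refine (withDensity_eq_iff_of_sigmaFinite hk.aemeasurable measurable_one.aemeasurable).1 ?_
    rw [← fst_prod_withDensity _ _ hh, h_fst, withDensity_one]
  have hk_comp : (fun x ↦ ∫⁻ y, (h ∘ Prod.map f g) (x, y) ∂ν) = k ∘ f := by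
    ext x
    exact (lintegral_map (f := fun y ↦ h (f x, y)) (by fun_prop) hg).symm
  have hk_comp_one : k ∘ f =ᵐ[μ] 1 := ae_of_ae_map hf.aemeasurable hk_one
  rw [fst_prod_withDensity _ _ (by fun_prop), hk_comp, withDensity_congr_ae hk_comp_one,
    withDensity_one]

theorem map_swap_prod_withDensity (μ : Measure X) (ν : Measure Y) [SFinite μ] [SFinite ν]
    {h : X × Y → ℝ≥0∞} (hh : Measurable h) :
    ((μ.prod ν).withDensity h).map Prod.swap = (ν.prod μ).withDensity (h ∘ Prod.swap) := by
  have h_map := map_withDensity_comp (μ := μ.prod ν) measurable_swap (hh.comp measurable_swap)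
  rwa [Measure.prod_swap] at h_map

theorem snd_withDensity_comp_prodMap {μ : Measure X} {ν : Measure Y} [SFinite μ]
    [IsFiniteMeasure ν] {f : X → X'} {g : Y → Y'} (hf : Measurable f) (hg : Measurable g)
    {h : X' × Y' → ℝ≥0∞} (hh : Measurable h)
    (h_snd : (((μ.map f).prod (ν.map g)).withDensity h).snd = ν.map g) :
    ((μ.prod ν).withDensity (h ∘ Prod.map f g)).snd = ν := by
  rw [← Measure.fst_map_swap, map_swap_prod_withDensity _ _ hh] at h_snd
  rw [← Measure.fst_map_swap, map_swap_prod_withDensity _ _ (hh.comp (hf.prodMap hg))]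
  exact fst_withDensity_comp_prodMap (h := h ∘ Prod.swap) hg hf (hh.comp measurable_swap) h_snd

theorem exists_map_prodMap_eq {μ : Measure X} {ν : Measure Y} [IsFiniteMeasure μ]
    [IsFiniteMeasure ν] {f : X → X'} {g : Y → Y'} (hf : Measurable f) (hg : Measurable g)
    {ρ : Measure (X' × Y')} (hρ : ρ ≪ (μ.map f).prod (ν.map g)) (hρ₁ : ρ.fst = μ.map f)
    (hρ₂ : ρ.snd = ν.map g) :
    ∃ π : Measure (X × Y), π.fst = μ ∧ π.snd = ν ∧ π.map (Prod.map f g) = ρ := by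
  have : IsFiniteMeasure ρ := ⟨by rw [← Measure.fst_univ, hρ₁]; exact measure_lt_top _ _⟩
  set h := ρ.rnDeriv ((μ.map f).prod (ν.map g))
  have hh : Measurable h := Measure.measurable_rnDeriv _ _
  have hρh : ((μ.map f).prod (ν.map g)).withDensity h = ρ := Measure.withDensity_rnDeriv_eq _ _ hρ
  refine ⟨(μ.prod ν).withDensity (h ∘ Prod.map f g),
    fst_withDensity_comp_prodMap hf hg hh (hρh ▸ hρ₁),
    snd_withDensity_comp_prodMap hf hg hh (hρh ▸ hρ₂), ?_⟩
  rw [map_withDensity_comp (hf.prodMap hg) hh, ← Measure.map_prod_map μ ν hf hg, hρh]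

theorem absolutelyContinuous_prod_of_countable [Countable X] [Countable Y]
    [MeasurableSingletonClass X] [MeasurableSingletonClass Y] (ρ : Measure (X × Y))
    [SFinite ρ.snd] : ρ ≪ ρ.fst.prod ρ.snd := by
  refine Measure.AbsolutelyContinuous.mk fun s _ hs ↦ ?_
  rw [← Set.biUnion_of_singleton s, measure_biUnion_null_iff s.to_countable] at hs ⊢
  rintro ⟨x, y⟩ hxy
  have h_null := hs _ hxy
  rw [← Set.singleton_prod_singleton, Measure.prod_prod, mul_eq_zero,
    Measure.fst_apply (measurableSet_singleton x),
    Measure.snd_apply (measurableSet_singleton y)] at h_null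
  rcases h_null with h_null | h_null <;> exact measure_mono_null (by simp) h_null

end Lift

section MixedCoupling

variable {Ω : Type*} [MeasurableSpace Ω] {P : Measure Ω} [IsProbabilityMeasure P]

theorem IsMixture.exists_coupling_lintegral_le {X Y ι κ : Type*} [MeasurableSpace X]
    [MeasurableSpace Y] [MeasurableSpace ι] [MeasurableSpace κ] [Countable ι] [Countable κ]
    [MeasurableSingletonClass ι] [MeasurableSingletonClass κ] {μ : Ω → Measure X}
    {ν : Ω → Measure Y} {μbar : Measure X} {νbar : Measure Y} [IsFiniteMeasure μbar]
    [IsFiniteMeasure νbar] (hμ : IsMixture P μ μbar) (hν : IsMixture P ν νbar) {f : X → ι}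
    {k : Y → κ} (hf : Measurable f) (hk : Measurable k) {π : Ω → Measure (X × Y)}
    (hπ₁ : ∀ᵐ v ∂P, (π v).fst = μ v) (hπ₂ : ∀ᵐ v ∂P, (π v).snd = ν v) {c : ι × κ → ℝ≥0}
    {g : Ω → ℝ≥0∞} (hg : AEMeasurable g P)
    (hc : ∀ᵐ v ∂P, ∫⁻ p, c (Prod.map f k p) ∂π v ≤ g v) :
    ∃ σ : Measure (X × Y), σ.fst = μbar ∧ σ.snd = νbar ∧
      ∫⁻ p, c (Prod.map f k p) ∂σ ≤ ∫⁻ v, g v ∂P := by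
  have hfk : Measurable (Prod.map f k) := hf.prodMap hk
  have h_cost : ∀ τ : Measure (X × Y),
      ∫⁻ q, c q ∂τ.map (Prod.map f k) = ∫⁻ p, c (Prod.map f k p) ∂τ :=
    fun τ ↦ lintegral_map (measurable_of_countable _) hfk
  obtain ⟨Λ, hΛ⟩ := exists_isIntegralExtension P
  let ρ : Ω → Measure (ι × κ) := fun v ↦ (π v).map (Prod.map f k)
  have hα : IsMixture P (fun v ↦ (ρ v).fst) (μbar.map f) := by
    refine (hμ.map hf).congr_ae (hπ₁.mono fun v hv ↦ ?_)
    simp only [ρ, fst_map_prodMap _ hf hk, hv]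
  have hβ : IsMixture P (fun v ↦ (ρ v).snd) (νbar.map k) := by
    refine (hν.map hk).congr_ae (hπ₂.mono fun v hv ↦ ?_)
    simp only [ρ, snd_map_prodMap _ hf hk, hv]
  have h_fst : (atomicMixture Λ ρ).fst = μbar.map f := fst_atomicMixture hΛ hα hβ
  have h_snd : (atomicMixture Λ ρ).snd = νbar.map k := snd_atomicMixture hΛ hα hβ
  have : IsFiniteMeasure (atomicMixture Λ ρ).snd := h_snd ▸ inferInstance
  have h_ac := absolutelyContinuous_prod_of_countable (atomicMixture Λ ρ)
  rw [h_fst, h_snd] at h_ac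
  obtain ⟨σ, hσ₁, hσ₂, hσ⟩ := exists_map_prodMap_eq hf hk h_ac h_fst h_snd
  refine ⟨σ, hσ₁, hσ₂, ?_⟩
  rw [← h_cost, hσ]
  exact lintegral_atomicMixture_le hΛ hg (by simpa only [ρ, h_cost] using hc)

end MixedCoupling

section Perturbation

theorem sq_le_one_add_mul_of_le_add {a b δ : ℝ≥0} (h : b ≤ a + 2 * δ) :
    b ^ 2 ≤ (1 + δ) * (a ^ 2 + 4 * δ) := by
  refine (pow_le_pow_left' h 2).trans ?_
  rw [← NNReal.coe_le_coe]
  push_cast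
  nlinarith [mul_nonneg δ.coe_nonneg (sq_nonneg ((a : ℝ) - 2))]

theorem nnnorm_sub_sq_le {E : Type*} [SeminormedAddCommGroup E] {x y x' y' : E} {δ : ℝ≥0}
    (hx : nndist x x' ≤ δ) (hy : nndist y y' ≤ δ) :
    ‖x - y‖₊ ^ 2 ≤ (1 + δ) * (‖x' - y'‖₊ ^ 2 + 4 * δ) := by
  refine sq_le_one_add_mul_of_le_add ?_
  rw [← nndist_eq_nnnorm, ← nndist_eq_nnnorm]
  calc nndist x y ≤ nndist x x' + nndist x' y' + nndist y' y := mod_cast dist_triangle4 x x' y' y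
    _ ≤ δ + nndist x' y' + δ := by rw [nndist_comm y' y]; gcongr
    _ = nndist x' y' + 2 * δ := by ring

theorem lintegral_nnnorm_sub_sq_le {Z E : Type*} [MeasurableSpace Z] [SeminormedAddCommGroup E]
    {π : Measure Z} [IsProbabilityMeasure π] {x y x' y' : Z → E} {δ : ℝ≥0}
    (hx : ∀ z, nndist (x z) (x' z) ≤ δ) (hy : ∀ z, nndist (y z) (y' z) ≤ δ) :
    ∫⁻ z, (‖x z - y z‖₊ : ℝ≥0∞) ^ 2 ∂π ≤
      (1 + δ) * (∫⁻ z, (‖x' z - y' z‖₊ : ℝ≥0∞) ^ 2 ∂π + 4 * δ) :=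
  calc ∫⁻ z, (‖x z - y z‖₊ : ℝ≥0∞) ^ 2 ∂π
      ≤ ∫⁻ z, (1 + δ) * ((‖x' z - y' z‖₊ : ℝ≥0∞) ^ 2 + 4 * δ) ∂π :=
        by
        gcongr with z
        exact_mod_cast nnnorm_sub_sq_le (hx z) (hy z)
    _ = (1 + δ) * (∫⁻ z, (‖x' z - y' z‖₊ : ℝ≥0∞) ^ 2 ∂π + 4 * δ) := by
        rw [lintegral_const_mul' _ _ (by finiteness), lintegral_add_const]

theorem le_of_forall_pos_le_one_add_mul {a b : ℝ≥0∞}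
    (h : ∀ δ : ℝ≥0, 0 < δ → a ≤ (1 + δ) * ((1 + δ) * (b + 4 * δ) + 4 * δ)) : a ≤ b := by
  induction b with
  | top => exact le_top
  | coe b =>
    have h_cont : Continuous fun δ : ℝ≥0 ↦
        (((1 + δ) * ((1 + δ) * (b + 4 * δ) + 4 * δ) : ℝ≥0) : ℝ≥0∞) :=
      ENNReal.continuous_coe.comp (by fun_prop)
    have h_lim := (h_cont.tendsto 0).mono_left (nhdsWithin_le_nhds (s := Set.Ioi 0))
    simp only [add_zero, mul_zero, one_mul] at h_lim
    refine ge_of_tendsto h_lim ?_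
    filter_upwards [self_mem_nhdsWithin] with δ hδ
    exact_mod_cast h δ hδ

end Perturbation

section Wasserstein

variable {E : Type*} [NormedAddCommGroup E] [MeasurableSpace E]

theorem W2sq_le_of_coupling {μ ν : Measure E} (π : Measure (E × E)) [hπ : IsProbabilityMeasure π]
    (hπ₁ : π.fst = μ) (hπ₂ : π.snd = ν) :
    W2sq μ ν ≤ ∫⁻ p, (‖p.1 - p.2‖₊ : ℝ≥0∞) ^ 2 ∂π :=
  iInf₂_le_of_le π hπ (iInf₂_le hπ₁ hπ₂)

theorem exists_coupling_of_W2sq_lt {μ ν : Measure E} {a : ℝ≥0∞} (h : W2sq μ ν < a) :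
    ∃ π : Measure (E × E), IsProbabilityMeasure π ∧ π.fst = μ ∧ π.snd = ν ∧
      ∫⁻ p, (‖p.1 - p.2‖₊ : ℝ≥0∞) ^ 2 ∂π < a := by
  simpa only [W2sq, Measure.fst, Measure.snd, iInf_lt_iff, exists_prop] using h

variable [OpensMeasurableSpace E] [SeparableSpace E] {Ω : Type*} [MeasurableSpace Ω]

section Mixture

variable {P : Measure Ω} [IsProbabilityMeasure P] {μ ν : Ω → Measure E} {μbar νbar : Measure E}
  (hμ : IsMixture P μ μbar) (hν : IsMixture P ν νbar) {g : Ω → ℝ≥0∞} (hg : AEMeasurable g P)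
include hμ hν hg

theorem W2sq_le_lintegral_of_couplings {π : Ω → Measure (E × E)}
    (hπ : ∀ᵐ v ∂P, IsProbabilityMeasure (π v)) (hπ₁ : ∀ᵐ v ∂P, (π v).fst = μ v)
    (hπ₂ : ∀ᵐ v ∂P, (π v).snd = ν v)
    (hπg : ∀ᵐ v ∂P, ∫⁻ p, (‖p.1 - p.2‖₊ : ℝ≥0∞) ^ 2 ∂π v ≤ g v) :
    W2sq μbar νbar ≤ ∫⁻ v, g v ∂P := by
  have : IsProbabilityMeasure μbar := hμ.isProbabilityMeasure <| by
    filter_upwards [hπ, hπ₁] with v _ hv using hv ▸ inferInstance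
  have : IsProbabilityMeasure νbar := hν.isProbabilityMeasure <| by
    filter_upwards [hπ, hπ₂] with v _ hv using hv ▸ inferInstance
  refine le_of_forall_pos_le_one_add_mul fun δ hδ ↦ ?_
  obtain ⟨Q, r, hQ, hr⟩ := exists_measurable_nndist_le (X := E) hδ
  have hr' : ∀ x, nndist (r (Q x)) x ≤ δ := fun x ↦ nndist_comm x _ ▸ hr x
  let c : ℕ × ℕ → ℝ≥0 := fun q ↦ ‖r q.1 - r q.2‖₊ ^ 2
  have hc : ∀ᵐ v ∂P, ∫⁻ p, c (Prod.map Q Q p) ∂π v ≤ (1 + δ) * (g v + 4 * δ) := by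
    filter_upwards [hπ, hπg] with v _ hv
    simp only [c, Prod.map_fst, Prod.map_snd, coe_pow]
    refine (lintegral_nnnorm_sub_sq_le (fun p : E × E ↦ hr' p.1) fun p ↦ hr' p.2).trans ?_
    gcongr
  obtain ⟨σ, hσ₁, hσ₂, hσ⟩ := hμ.exists_coupling_lintegral_le hν hQ hQ hπ₁ hπ₂
    ((hg.add_const _).const_mul _) hc
  have : IsProbabilityMeasure σ := ⟨by rw [← Measure.fst_univ, hσ₁, measure_univ]⟩
  have h_int : ∫⁻ v, (1 + δ) * (g v + 4 * δ) ∂P = (1 + δ) * (∫⁻ v, g v ∂P + 4 * δ) := by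
    rw [lintegral_const_mul' _ _ (by finiteness), lintegral_add_const]
  simp only [c, Prod.map_fst, Prod.map_snd, coe_pow, h_int] at hσ
  calc W2sq μbar νbar
      ≤ ∫⁻ p, (‖p.1 - p.2‖₊ : ℝ≥0∞) ^ 2 ∂σ := W2sq_le_of_coupling σ hσ₁ hσ₂
    _ ≤ (1 + δ) * (∫⁻ p, (‖r (Q p.1) - r (Q p.2)‖₊ : ℝ≥0∞) ^ 2 ∂σ + 4 * δ) :=
        lintegral_nnnorm_sub_sq_le (fun p ↦ hr p.1) fun p ↦ hr p.2
    _ ≤ (1 + δ) * ((1 + δ) * (∫⁻ v, g v ∂P + 4 * δ) + 4 * δ) := by gcongr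

theorem W2sq_le_lintegral_of_isMixture (hWg : ∀ᵐ v ∂P, W2sq (μ v) (ν v) ≤ g v) :
    W2sq μbar νbar ≤ ∫⁻ v, g v ∂P := by
  refine ENNReal.le_of_forall_pos_le_add fun η hη hfin ↦ ?_
  have h_coupling : ∀ᵐ v ∂P, ∃ π : Measure (E × E), IsProbabilityMeasure π ∧ π.fst = μ v ∧
      π.snd = ν v ∧ ∫⁻ p, (‖p.1 - p.2‖₊ : ℝ≥0∞) ^ 2 ∂π < g v + η := by
    filter_upwards [hWg, ae_lt_top' hg hfin.ne] with v hv hgv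
    exact exists_coupling_of_W2sq_lt
      (hv.trans_lt (ENNReal.lt_add_right hgv.ne (coe_ne_zero.2 hη.ne')))
  obtain ⟨π, hπ⟩ := h_coupling.choice
  calc W2sq μbar νbar
      ≤ ∫⁻ v, g v + η ∂P := W2sq_le_lintegral_of_couplings hμ hν (hg.add_const _)
        (hπ.mono fun _ h ↦ h.1) (hπ.mono fun _ h ↦ h.2.1) (hπ.mono fun _ h ↦ h.2.2.1)
        (hπ.mono fun _ h ↦ h.2.2.2.le)
    _ = ∫⁻ v, g v ∂P + η := lintegral_add_const _ _

end Mixture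

theorem W2sq_mixture_convexity_general {m : Measure Ω} {w : Ω → ℝ≥0∞} (hw : AEMeasurable w m)
    (hw_int : ∫⁻ v, w v ∂m = 1) {μ ν : Ω → Measure E} {μbar νbar : Measure E}
    (hμ : ∀ B, MeasurableSet B → AEMeasurable (fun v ↦ μ v B) m)
    (hν : ∀ B, MeasurableSet B → AEMeasurable (fun v ↦ ν v B) m)
    (hμbar : ∀ B, MeasurableSet B → μbar B = ∫⁻ v, w v * μ v B ∂m)
    (hνbar : ∀ B, MeasurableSet B → νbar B = ∫⁻ v, w v * ν v B ∂m) :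
    W2sq μbar νbar ≤ upperLintegral m fun v ↦ w v * W2sq (μ v) (ν v) := by
  refine le_iInf₂ fun g hg ↦ le_iInf fun hWg ↦ ?_
  have : IsProbabilityMeasure (m.withDensity w) :=
    ⟨by rw [withDensity_apply _ .univ, setLIntegral_univ, hw_int]⟩
  have h_ac := withDensity_absolutelyContinuous m w
  have hw_top : ∀ᵐ v ∂m, w v < ∞ := ae_lt_top' hw (by simp [hw_int])
  have hWg' : ∀ᵐ v ∂m.withDensity w, W2sq (μ v) (ν v) ≤ g v / w v := by
    rw [ae_withDensity_iff' hw]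
    filter_upwards [hw_top] with v hv hv₀
    rw [ENNReal.le_div_iff_mul_le (.inl hv₀) (.inl hv.ne), mul_comm]
    exact hWg v
  calc W2sq μbar νbar
      ≤ ∫⁻ v, g v / w v ∂m.withDensity w := W2sq_le_lintegral_of_isMixture
        (.withDensity hw hμ hμbar) (.withDensity hw hν hνbar)
        ((hg.aemeasurable.div hw).mono_ac h_ac) hWg'
    _ = ∫⁻ v, w v * (g v / w v) ∂m :=
        lintegral_withDensity_eq_lintegral_mul₀ hw (hg.aemeasurable.div hw)
    _ ≤ ∫⁻ v, g v ∂m := lintegral_mono fun v ↦ ENNReal.mul_div_le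

end Wasserstein

theorem lintegral_ofReal_eq_one {Ω : Type*} [MeasurableSpace Ω] {m : Measure Ω} {w : Ω → ℝ}
    (hw : 0 ≤ᵐ[m] w) (hw_int : ∫ v, w v ∂m = 1) : ∫⁻ v, ENNReal.ofReal (w v) ∂m = 1 := by
  rw [← ofReal_integral_eq_lintegral_ofReal
    (.of_integral_ne_zero (hw_int ▸ one_ne_zero)) hw, hw_int, ofReal_one]

/-- **Convexity of the squared Wasserstein distance under mixtures**:
`W₂²(μ̄, ν̄) ≤ ∫₀¹ w(v) W₂²(μ^v, ν^v) dv` for mixtures with a common weight function `w`. -/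
theorem W2sq_mixture_convexity
    (d : ℕ) (w : ℝ → ℝ)
    (hw_meas : AEMeasurable w (volume.restrict (Set.Icc (0:ℝ) 1)))
    (hw_nonneg : ∀ v ∈ Set.Icc (0:ℝ) 1, 0 ≤ w v)
    (hw_int : ∫ v in Set.Icc (0:ℝ) 1, w v = 1)
    (μ ν : ℝ → Measure (EuclideanSpace ℝ (Fin d)))
    (hμprob : ∀ v ∈ Set.Icc (0:ℝ) 1, IsProbabilityMeasure (μ v))
    (hνprob : ∀ v ∈ Set.Icc (0:ℝ) 1, IsProbabilityMeasure (ν v))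
    (hμsetwise : ∀ B : Set (EuclideanSpace ℝ (Fin d)), MeasurableSet B →
      AEMeasurable (fun v => μ v B) (volume.restrict (Set.Icc (0:ℝ) 1)))
    (hνsetwise : ∀ B : Set (EuclideanSpace ℝ (Fin d)), MeasurableSet B →
      AEMeasurable (fun v => ν v B) (volume.restrict (Set.Icc (0:ℝ) 1)))
    (hμmom : (⨆ v ∈ Set.Icc (0:ℝ) 1, ∫⁻ x, (‖x‖₊ : ℝ≥0∞) ^ 2 ∂(μ v)) < ⊤)
    (hνmom : (⨆ v ∈ Set.Icc (0:ℝ) 1, ∫⁻ x, (‖x‖₊ : ℝ≥0∞) ^ 2 ∂(ν v)) < ⊤)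
    (μbar νbar : Measure (EuclideanSpace ℝ (Fin d)))
    (hμbar_prob : IsProbabilityMeasure μbar)
    (hνbar_prob : IsProbabilityMeasure νbar)
    (hμbar : ∀ B : Set (EuclideanSpace ℝ (Fin d)), MeasurableSet B →
      μbar B = ∫⁻ v in Set.Icc (0:ℝ) 1, ENNReal.ofReal (w v) * μ v B)
    (hνbar : ∀ B : Set (EuclideanSpace ℝ (Fin d)), MeasurableSet B →
      νbar B = ∫⁻ v in Set.Icc (0:ℝ) 1, ENNReal.ofReal (w v) * ν v B) :
    W2sq μbar νbar ≤
      upperLintegral (volume.restrict (Set.Icc (0:ℝ) 1))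
        (fun v => ENNReal.ofReal (w v) * W2sq (μ v) (ν v)) := by
  have hw_ae : 0 ≤ᵐ[volume.restrict (Set.Icc (0:ℝ) 1)] w :=
    ae_restrict_of_forall_mem measurableSet_Icc hw_nonneg
  exact W2sq_mixture_convexity_general hw_meas.ennreal_ofReal
    (lintegral_ofReal_eq_one hw_ae hw_int) hμsetwise hνsetwise hμbar hνbar

end
end
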